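/- arXiv:1606.08246 — 6 statements merged into one kernel-verified Lean document; each statement's English description precedes it below -/
import Mathlib

section
/- In a finite bipartite graph G with a function b : V(G) → ℕ, the maximum cardinality of a b-matching of G equals the minimum, over all subsets Z ⊆ V(G), of b(V(G) ∖ Z) + |E[Z]|. -/
open scoped symmDiff

variable {V : Type} [Fintype V]

/-- `G` is bipartite with color classes `A` and `B`. -/
structure Bipartition (G : SimpleGraph V) (A B : Set V) : Prop where
  disjoint : Disjoint A B
  cover : A ∪ B = Set.univ
  between : ∀ ⦃u v : V⦄, G.Adj u v → (u ∈ A ∧ v ∈ B) ∨ (u ∈ B ∧ v ∈ A)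

/-- `M` is a `b`-matching of `G`: a set of edges of `G` such that each vertex `v` is
incident to at most `b v` edges of `M`. -/
def IsBMatching (G : SimpleGraph V) (b : V → ℕ) (M : Set (Sym2 V)) : Prop :=
  M ⊆ G.edgeSet ∧ ∀ v : V, {e ∈ M | v ∈ e}.ncard ≤ b v

/-- `M` is a maximum `b`-matching of `G`. -/
def IsMaxBMatching (G : SimpleGraph V) (b : V → ℕ) (M : Set (Sym2 V)) : Prop :=
  IsBMatching G b M ∧ ∀ N : Set (Sym2 V), IsBMatching G b N → N.ncard ≤ M.ncard

/-- `E[X]`: the set of edges of `G` with both ends in `X`. -/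
def edgesIn (G : SimpleGraph V) (X : Set V) : Set (Sym2 V) :=
  {e ∈ G.edgeSet | ∀ v ∈ e, v ∈ X}

/-- `b(X) = ∑_{v ∈ X} b v`. -/
noncomputable def bSum (b : V → ℕ) (X : Set V) : ℕ := ∑ᶠ v ∈ X, b v

/-- `Z` is a `b`-verifying set: `b(Zᶜ) + |E[Z]|` equals the size of a maximum `b`-matching. -/
def IsVerifying (G : SimpleGraph V) (b : V → ℕ) (Z : Set V) : Prop :=
  ∃ M : Set (Sym2 V), IsMaxBMatching G b M ∧ bSum b Zᶜ + (edgesIn G Z).ncard = M.ncard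

/-- `v` is `M`-tight. -/
def IsTight (b : V → ℕ) (M : Set (Sym2 V)) (v : V) : Prop :=
  {e ∈ M | v ∈ e}.ncard = b v

/-- `v` is `M`-loose. -/
def IsLoose (b : V → ℕ) (M : Set (Sym2 V)) (v : V) : Prop :=
  {e ∈ M | v ∈ e}.ncard < b v

/-- `M` is a perfect `b`-matching. -/
def IsPerfect (G : SimpleGraph V) (b : V → ℕ) (M : Set (Sym2 V)) : Prop :=
  IsBMatching G b M ∧ ∀ v : V, IsTight b M v

/-- An edge is `b`-inevitable if it is an edge of `G` contained in every maximum `b`-matching. -/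
def IsInevitable (G : SimpleGraph V) (b : V → ℕ) (e : Sym2 V) : Prop :=
  e ∈ G.edgeSet ∧ ∀ M : Set (Sym2 V), IsMaxBMatching G b M → e ∈ M

/-- An edge is `b`-forbidden if it is an edge of `G` contained in no maximum `b`-matching. -/
def IsForbidden (G : SimpleGraph V) (b : V → ℕ) (e : Sym2 V) : Prop :=
  e ∈ G.edgeSet ∧ ∀ M : Set (Sym2 V), IsMaxBMatching G b M → e ∉ M

/-- An edge is `b`-flexible if some maximum `b`-matching contains it and some does not. -/
def IsFlexibleEdge (G : SimpleGraph V) (b : V → ℕ) (e : Sym2 V) : Prop :=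
  (∃ M : Set (Sym2 V), IsMaxBMatching G b M ∧ e ∈ M) ∧
  (∃ M : Set (Sym2 V), IsMaxBMatching G b M ∧ e ∉ M)

/-- The spanning subgraph of `G` whose edges are the `b`-flexible edges. -/
def flexGraph (G : SimpleGraph V) (b : V → ℕ) : SimpleGraph V where
  Adj u v := IsFlexibleEdge G b s(u, v)
  symm := by
    constructor
    intro u v h
    rwa [Sym2.eq_swap] at h
  loopless := by
    constructor
    intro v h
    obtain ⟨⟨M, hM, heM⟩, -⟩ := h
    exact G.loopless.irrefl v ((G.mem_edgeSet).mp (hM.1.1 heM))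

/-- A `b`-flexible component of `G`, identified with the corresponding connected
component of the spanning subgraph of flexible edges. -/
abbrev FlexComp (G : SimpleGraph V) (b : V → ℕ) := (flexGraph G b).ConnectedComponent

/-- `D(G;b)`: the set of vertices that are `M`-loose for some maximum `b`-matching `M`. -/
def Dset (G : SimpleGraph V) (b : V → ℕ) : Set V :=
  {v | ∃ M : Set (Sym2 V), IsMaxBMatching G b M ∧ IsLoose b M v}

/-- `c` is a `b`-loose flexible component. -/
def LooseComp (G : SimpleGraph V) (b : V → ℕ) (c : FlexComp G b) : Prop :=
  ∃ v ∈ c.supp, v ∈ Dset G b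

/-- `c` is a `b`-inactive flexible component. -/
def InactiveComp (G : SimpleGraph V) (b : V → ℕ) (c : FlexComp G b) : Prop :=
  ∃ v, c.supp = {v} ∧ b v = 0

/-- `c` is a `b`-inconsistent flexible component. -/
def InconsistentComp (G : SimpleGraph V) (b : V → ℕ) (c : FlexComp G b) : Prop :=
  LooseComp G b c ∨ ∃ v, c.supp = {v} ∧ b v = 0 ∧ ∃ u ∈ Dset G b, G.Adj v u

/-- `c` is a `b`-consistent flexible component. -/
def ConsistentComp (G : SimpleGraph V) (b : V → ℕ) (c : FlexComp G b) : Prop :=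
  ¬ InconsistentComp G b c

/-- `c` is a `b`-loose flexible component hooked up by the color class `W`. -/
def LooseHooked (G : SimpleGraph V) (b : V → ℕ) (W : Set V) (c : FlexComp G b) : Prop :=
  ∃ v ∈ c.supp ∩ W, v ∈ Dset G b

/-- `c` is a `b`-inactive flexible component hooked up by the color class `W`. -/
def InactiveHooked (G : SimpleGraph V) (b : V → ℕ) (W : Set V) (c : FlexComp G b) : Prop :=
  ∃ v, c.supp = {v} ∧ b v = 0 ∧ ∃ u ∈ Dset G b ∩ W, G.Adj v u

/-- `c` is a `b`-inconsistent flexible component hooked up by the color class `W`. -/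
def HookedUp (G : SimpleGraph V) (b : V → ℕ) (W : Set V) (c : FlexComp G b) : Prop :=
  LooseHooked G b W c ∨ InactiveHooked G b W c

/-- `X` is separating: empty or a union of vertex sets of `b`-flexible components. -/
def IsSeparating (G : SimpleGraph V) (b : V → ℕ) (X : Set V) : Prop :=
  ∃ S : Set (FlexComp G b), X = ⋃ c ∈ S, c.supp

/-- The number of edges in the list `es` incident to `v` that lie in `M`. -/
noncomputable def edgeDeg (es : List (Sym2 V)) (M : Set (Sym2 V)) (v : V) : ℕ :=
  {e : Sym2 V | e ∈ es ∧ v ∈ e ∧ e ∈ M}.ncard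

/-- `p` is an `M`-wedge path from `x` to `y`. -/
def IsWedgePath {G : SimpleGraph V} (M : Set (Sym2 V)) {x y : V} (p : G.Walk x y) : Prop :=
  p.IsPath ∧ (∀ v ∈ p.support, v ≠ y → edgeDeg p.edges M v = 1) ∧ edgeDeg p.edges M y = 0

/-- `p` is an `M`-saturated path between `x` and `y`. -/
def IsSaturatedPath {G : SimpleGraph V} (M : Set (Sym2 V)) {x y : V} (p : G.Walk x y) : Prop :=
  p.IsPath ∧ ∀ v ∈ p.support, edgeDeg p.edges M v = 1

/-- `p` is an `M`-exposed path between `x` and `y`. -/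
def IsExposedPath {G : SimpleGraph V} (M : Set (Sym2 V)) {x y : V} (p : G.Walk x y) : Prop :=
  p.IsPath ∧ ∀ v ∈ p.support, edgeDeg p.edges Mᶜ v = 1

/-- `p` is an `(M; A, B)`-ascending path from `u` to `v`. -/
def IsAscending {G : SimpleGraph V} (A B : Set V) (M : Set (Sym2 V)) {u v : V}
    (p : G.Walk u v) : Prop :=
  (u ∈ A → v ∈ A → IsWedgePath M p) ∧
  (u ∈ A → v ∈ B → IsSaturatedPath M p) ∧
  (u ∈ B → v ∈ A → IsExposedPath M p) ∧
  (u ∈ B → v ∈ B → IsWedgePath M p.reverse)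

/-- The one-step relation `⊴_A` on `b`-flexible components: `c₁ ⊴_A c₂` iff `c₁ = c₂`, or
there is a `b`-inevitable edge between `V(c₁) ∩ A` and `V(c₂) ∩ B`, or a `b`-forbidden edge
between `V(c₂) ∩ A` and `V(c₁) ∩ B`. -/
def StepRel (G : SimpleGraph V) (b : V → ℕ) (A B : Set V) (c₁ c₂ : FlexComp G b) : Prop :=
  c₁ = c₂ ∨
  (∃ u ∈ c₁.supp ∩ A, ∃ v ∈ c₂.supp ∩ B, IsInevitable G b s(u, v)) ∨
  (∃ u ∈ c₂.supp ∩ A, ∃ v ∈ c₁.supp ∩ B, IsForbidden G b s(u, v))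

/-- The one-step relation `⊴_A` restricted to `b`-consistent flexible components. -/
def ConsStepRel (G : SimpleGraph V) (b : V → ℕ) (A B : Set V) (c₁ c₂ : FlexComp G b) : Prop :=
  ConsistentComp G b c₁ ∧ ConsistentComp G b c₂ ∧ StepRel G b A B c₁ c₂

/-- `I` is a lower ideal of the relation `r`. -/
def IsLowerIdeal {α : Type*} (r : α → α → Prop) (I : Set α) : Prop :=
  ∀ ⦃c d : α⦄, d ∈ I → r c d → c ∈ I

/-- `I` is an upper ideal of the relation `r`. -/
def IsUpperIdeal {α : Type*} (r : α → α → Prop) (I : Set α) : Prop :=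
  ∀ ⦃c d : α⦄, c ∈ I → r c d → d ∈ I

open Classical in
/-- Total weight outside `X`. -/
noncomputable def osum (a : V → ℕ) (X : Set V) : ℕ := ∑ x, if x ∈ X then 0 else a x

open Classical in
/-- Number of pairs of `E` in `X × Y`. -/
noncomputable def ecnt (E : Finset (V × V)) (X Y : Set V) : ℕ :=
  ∑ e ∈ E, if e.1 ∈ X ∧ e.2 ∈ Y then 1 else 0

/-- Value of a cover `(X, Y)`. -/
noncomputable def cval (E : Finset (V × V)) (a c : V → ℕ) (X Y : Set V) : ℕ :=
  osum a X + osum c Y + ecnt E X Y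

theorem cval_uncross (E : Finset (V × V)) (a c : V → ℕ) (X1 Y1 X2 Y2 : Set V) :
    cval E a c (X1 ∩ X2) (Y1 ∪ Y2) + cval E a c (X1 ∪ X2) (Y1 ∩ Y2) ≤
      cval E a c X1 Y1 + cval E a c X2 Y2 := by
  classical
  have h1 : osum a (X1 ∩ X2) + osum a (X1 ∪ X2)
      ≤ osum a (X1) + osum a (X2) := by
    unfold osum
    rw [← Finset.sum_add_distrib, ← Finset.sum_add_distrib]
    apply Finset.sum_le_sum
    intro x _
    by_cases h : x ∈ X1 <;> by_cases h' : x ∈ X2 <;> simp [h, h']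
  have h2 : osum c (Y1 ∪ Y2) + osum c (Y1 ∩ Y2)
      ≤ osum c (Y1) + osum c (Y2) := by
    unfold osum
    rw [← Finset.sum_add_distrib, ← Finset.sum_add_distrib]
    apply Finset.sum_le_sum
    intro x _
    by_cases h : x ∈ Y1 <;> by_cases h' : x ∈ Y2 <;> simp [h, h']
  have h3 : ecnt E (X1 ∩ X2) (Y1 ∪ Y2) +
      ecnt E (X1 ∪ X2) (Y1 ∩ Y2)
      ≤ ecnt E (X1) (Y1) +
      ecnt E (X2) (Y2) := by
    unfold ecnt
    rw [← Finset.sum_add_distrib, ← Finset.sum_add_distrib]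
    apply Finset.sum_le_sum
    intro e _
    by_cases h : e.1 ∈ X1 <;> by_cases h' : e.1 ∈ X2 <;>
    by_cases k : e.2 ∈ Y1 <;> by_cases k' : e.2 ∈ Y2 <;> simp [h, h', k, k']
  unfold cval
  omega

open Classical in
theorem cval_insert (E : Finset (V × V)) (a c : V → ℕ) (X Y : Set V) (e : V × V) (he : e ∉ E) :
    cval (insert e E) a c X Y = cval E a c X Y + if e.1 ∈ X ∧ e.2 ∈ Y then 1 else 0 := by
  unfold cval ecnt
  rw [Finset.sum_insert he]
  omega

open Classical in
theorem sum_bump (a : V → ℕ) (p : V) (hp : a p ≠ 0) (X : Set V) :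
    osum a (X) =
      osum (fun x => a x - if x = p then 1 else 0) (X) + if p ∈ X then 0 else 1 := by
  have : (if p ∈ X then 0 else 1) = ∑ x, if x = p then (if p ∈ X then 0 else 1) else 0 := by
    simp
  unfold osum
  rw [this, ← Finset.sum_add_distrib]
  apply Finset.sum_congr rfl
  intro x _
  by_cases h : x = p
  · subst h
    by_cases hx : x ∈ X <;> simp [hx]
    omega
  · simp [h]

open Classical in
theorem cval_bump (E : Finset (V × V)) (a c : V → ℕ) (p q : V) (hp : a p ≠ 0) (hq : c q ≠ 0)
    (X Y : Set V) :
    cval E a c X Y = cval E (fun x => a x - if x = p then 1 else 0)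
      (fun x => c x - if x = q then 1 else 0) X Y
        + (if p ∈ X then 0 else 1) + (if q ∈ Y then 0 else 1) := by
  unfold cval
  rw [sum_bump a p hp X, sum_bump c q hq Y]
  omega

open Classical in
theorem sum_diff_zero (a : V → ℕ) (p : V) (hp : a p = 0) (X : Set V) :
    osum a (X \ {p}) = osum a X := by
  unfold osum
  apply Finset.sum_congr rfl
  intro x _
  by_cases h : x = p
  · subst h; simp [hp]
  · simp [h]

open Classical in
theorem core (E : Finset (V × V)) : ∀ (a c : V → ℕ), ∃ M ⊆ E,
    (∀ x, (M.filter (fun e => e.1 = x)).card ≤ a x) ∧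
    (∀ y, (M.filter (fun e => e.2 = y)).card ≤ c y) ∧
    ∃ X Y : Set V, cval E a c X Y ≤ M.card := by
  induction E using Finset.induction_on with
  | empty =>
    intro a c
    exact ⟨∅, by simp, by simp, by simp, Set.univ, Set.univ, by simp [cval, osum, ecnt]⟩
  | insert e E he ih =>
    intro a c
    obtain ⟨M1, hM1, h1a, h1c, X1, Y1, h1⟩ := ih a c
    have hM1' : M1 ⊆ insert e E := hM1.trans (Finset.subset_insert _ _)
    by_cases hp : a e.1 = 0
    · refine ⟨M1, hM1', h1a, h1c, X1 \ {e.1}, Y1, le_trans ?_ h1⟩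
      rw [cval_insert _ _ _ _ _ _ he]
      unfold cval
      rw [sum_diff_zero a e.1 hp]
      simp only [Set.mem_sdiff, Set.mem_singleton_iff, not_true_eq_false, and_false, false_and,
        if_false, add_zero]
      gcongr
      unfold ecnt
      gcongr with i hi
      by_cases u : i.1 ∈ X1 <;> by_cases v : i.2 ∈ Y1 <;> simp [u, v]
      split_ifs <;> omega
    by_cases hq : c e.2 = 0
    · refine ⟨M1, hM1', h1a, h1c, X1, Y1 \ {e.2}, le_trans ?_ h1⟩
      rw [cval_insert _ _ _ _ _ _ he]
      unfold cval
      rw [sum_diff_zero c e.2 hq]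
      simp only [Set.mem_sdiff, Set.mem_singleton_iff, not_true_eq_false, and_false,
        if_false, add_zero]
      gcongr
      unfold ecnt
      gcongr with i hi
      by_cases u : i.1 ∈ X1 <;> by_cases v : i.2 ∈ Y1 <;> simp [u, v]
      split_ifs <;> omega
    obtain ⟨M2, hM2, h2a, h2c, X2, Y2, h2⟩ := ih (fun x => a x - if x = e.1 then 1 else 0)
      (fun x => c x - if x = e.2 then 1 else 0)
    have heM2 : e ∉ M2 := fun h => he (hM2 h)
    -- it is enough to find a good cover
    suffices H : ∃ X Y : Set V, cval (insert e E) a c X Y ≤ max M1.card (M2.card + 1) by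
      rcases le_total (M2.card + 1) M1.card with hle | hle
      · rw [max_eq_left hle] at H
        exact ⟨M1, hM1', h1a, h1c, H⟩
      · rw [max_eq_right hle] at H
        refine ⟨insert e M2, Finset.insert_subset_insert _ hM2, ?_, ?_, ?_⟩
        · intro x
          have := h2a x
          rw [Finset.filter_insert]
          by_cases hx : e.1 = x
          · subst hx
            simp only [if_true] at this ⊢
            rw [Finset.card_insert_of_notMem (by simp [heM2])]
            omega
          · simp only [hx, Ne.symm hx, if_false] at this ⊢
            omega
        · intro x
          have := h2c x
          rw [Finset.filter_insert]
          by_cases hx : e.2 = x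
          · subst hx
            simp only [if_true] at this ⊢
            rw [Finset.card_insert_of_notMem (by simp [heM2])]
            omega
          · simp only [hx, Ne.symm hx, if_false] at this ⊢
            omega
        · rwa [Finset.card_insert_of_notMem heM2]
    by_contra hcon
    push Not at hcon
    have k1 := hcon X1 Y1
    have k2 := hcon X2 Y2
    have k3 := hcon (X1 ∩ X2) (Y1 ∪ Y2)
    have k4 := hcon (X1 ∪ X2) (Y1 ∩ Y2)
    have hu := cval_uncross E a c X1 Y1 X2 Y2
    have hb := cval_bump E a c e.1 e.2 hp hq X2 Y2
    rw [cval_insert _ _ _ _ _ _ he] at k1 k2 k3 k4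
    have l1 := le_max_left M1.card (M2.card + 1)
    have l2 := le_max_right M1.card (M2.card + 1)
    by_cases x2 : e.1 ∈ X2
    · by_cases y2 : e.2 ∈ Y2 <;> simp [x2, y2] at k2 hb <;> omega
    by_cases y2 : e.2 ∈ Y2
    · simp [x2, y2] at k2 hb
      omega
    simp only [Set.mem_inter_iff, x2, y2, and_false, false_and, if_false] at k3 k4 hb
    split_ifs at k1 <;> omega

theorem bSum_eq [DecidableEq V] (b : V → ℕ) (Z : Set V) [DecidablePred (· ∈ Z)] :
    bSum b Zᶜ = ∑ v, if v ∈ Z then 0 else b v := by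
  unfold bSum
  rw [finsum_mem_def, finsum_eq_sum_of_fintype]
  apply Finset.sum_congr rfl
  intro v _
  by_cases h : v ∈ Z <;> simp [h]

theorem weak_duality (G : SimpleGraph V) (b : V → ℕ) (M : Set (Sym2 V)) (hM : IsBMatching G b M)
    (Z : Set V) : M.ncard ≤ bSum b Zᶜ + (edgesIn G Z).ncard := by
  classical
  have hsub : M ⊆ (⋃ v ∈ (Finset.univ.filter (fun v => v ∉ Z)), {e ∈ M | v ∈ e}) ∪
      edgesIn G Z := by
    intro e he
    by_cases h : ∀ v ∈ e, v ∈ Z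
    · exact Or.inr ⟨hM.1 he, h⟩
    · push Not at h
      obtain ⟨v, hv, hvZ⟩ := h
      left
      simp only [Set.mem_iUnion]
      exact ⟨v, by simpa using hvZ, he, hv⟩
  refine (Set.ncard_le_ncard hsub (Set.toFinite _)).trans ((Set.ncard_union_le _ _).trans ?_)
  gcongr
  refine (Finset.set_ncard_biUnion_le _ _).trans ?_
  rw [bSum_eq, Finset.sum_filter]
  apply Finset.sum_le_sum
  intro v _
  by_cases h : v ∈ Z <;> simp [h]
  exact hM.2 v

theorem strong_duality (G : SimpleGraph V) (A B : Set V) (hG : Bipartition G A B) (b : V → ℕ) :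
    ∃ M : Set (Sym2 V), IsBMatching G b M ∧
      ∃ Z : Set V, bSum b Zᶜ + (edgesIn G Z).ncard ≤ M.ncard := by
  classical
  have hAB : ∀ v, v ∈ A → v ∉ B := fun v h h' => Set.disjoint_left.mp hG.disjoint h h'
  have hcov : ∀ v, v ∈ A ∨ v ∈ B := fun v => by
    have : v ∈ A ∪ B := by rw [hG.cover]; trivial
    exact this
  let E : Finset (V × V) := Finset.univ.filter (fun e => e.1 ∈ A ∧ e.2 ∈ B ∧ G.Adj e.1 e.2)
  have hE : ∀ e, e ∈ E ↔ e.1 ∈ A ∧ e.2 ∈ B ∧ G.Adj e.1 e.2 := fun e => by simp [E]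
  obtain ⟨M, hME, ha, hc, X, Y, hXY⟩ := core E (fun x => if x ∈ A then b x else 0)
    (fun x => if x ∈ B then b x else 0)
  have hinj : Set.InjOn (fun e : V × V => s(e.1, e.2)) (E : Set (V × V)) := by
    rintro ⟨x, y⟩ h ⟨x', y'⟩ h' heq
    rw [Finset.mem_coe, hE] at h h'
    simp only [Sym2.eq_iff] at heq
    rcases heq with ⟨rfl, rfl⟩ | ⟨rfl, rfl⟩
    · rfl
    · exact absurd h'.2.1 (hAB _ h.1)
  refine ⟨(fun e : V × V => s(e.1, e.2)) '' (M : Set (V × V)), ⟨?_, ?_⟩, (X ∩ A) ∪ (Y ∩ B), ?_⟩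
  · rintro _ ⟨e, he, rfl⟩
    exact ((hE e).1 (hME he)).2.2
  · intro v
    rcases hcov v with hv | hv
    · refine le_trans ?_ ((ha v).trans (by simp [hv]))
      rw [← Set.ncard_coe_finset]
      refine (Set.ncard_le_ncard ?_ (Set.toFinite _)).trans
        (Set.ncard_image_le (f := fun e : V × V => s(e.1, e.2)) (Set.toFinite _))
      rintro _ ⟨⟨e, he, rfl⟩, hve⟩
      refine ⟨e, ?_, rfl⟩
      have := (hE e).1 (hME he)
      rcases Sym2.mem_iff.1 hve with h | h
      · simpa using ⟨he, h.symm⟩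
      · exact absurd this.2.1 (h ▸ hAB v hv)
    · refine le_trans ?_ ((hc v).trans (by simp [hv]))
      rw [← Set.ncard_coe_finset]
      refine (Set.ncard_le_ncard ?_ (Set.toFinite _)).trans
        (Set.ncard_image_le (f := fun e : V × V => s(e.1, e.2)) (Set.toFinite _))
      rintro _ ⟨⟨e, he, rfl⟩, hve⟩
      refine ⟨e, ?_, rfl⟩
      have := (hE e).1 (hME he)
      rcases Sym2.mem_iff.1 hve with h | h
      · exact absurd hv (hAB v (h ▸ this.1))
      · simpa using ⟨he, h.symm⟩
  · rw [Set.InjOn.ncard_image (hinj.mono (by exact_mod_cast hME)), Set.ncard_coe_finset]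
    refine le_trans ?_ hXY
    unfold cval osum ecnt
    rw [bSum_eq, ← Finset.sum_add_distrib]
    gcongr with v hv
    · rcases hcov v with h | h
      · have := hAB v h
        by_cases hx : v ∈ X <;> simp [h, this, hx]
      · have : v ∉ A := fun h' => hAB v h' h
        by_cases hx : v ∈ Y <;> simp [h, this, hx]
    · rw [← Finset.card_filter, ← Set.ncard_coe_finset]
      refine (Set.ncard_le_ncard ?_ (Set.toFinite _)).trans
        (Set.ncard_image_le (f := fun e : V × V => s(e.1, e.2)) (Set.toFinite _))
      have key : ∀ x y, x ∈ A → y ∈ B → G.Adj x y → x ∈ (X ∩ A) ∪ (Y ∩ B) →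
          y ∈ (X ∩ A) ∪ (Y ∩ B) →
          (x, y) ∈ ((E.filter (fun e => e.1 ∈ X ∧ e.2 ∈ Y) : Finset (V × V)) : Set (V × V)) := by
        intro x y hx hy hadj h1 h2
        have hx' := hAB x hx
        have hy' : y ∉ A := fun h => hAB y h hy
        simp only [Finset.coe_filter, Set.mem_ofPred_eq, hE]
        simp [hx, hx', hy, hy'] at h1 h2
        exact ⟨⟨hx, hy, hadj⟩, h1, h2⟩
      rintro e ⟨he, hZ⟩
      induction e using Sym2.ind with
      | _ u v =>
        have hadj : G.Adj u v := he
        have hu := hZ u (by simp)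
        have hv := hZ v (by simp)
        rcases hG.between hadj with ⟨h1, h2⟩ | ⟨h1, h2⟩
        · exact ⟨(u, v), key u v h1 h2 hadj hu hv, rfl⟩
        · exact ⟨(v, u), key v u h2 h1 hadj.symm hv hu, Sym2.eq_swap⟩

/-- The maximum cardinality of a `b`-matching of a finite bipartite graph `G` equals the
minimum, over all `Z ⊆ V(G)`, of `b(V(G) ∖ Z) + |E[Z]|`. -/
theorem stmt_0 (G : SimpleGraph V) (A B : Set V) (hG : Bipartition G A B) (b : V → ℕ) :
    ∃ m : ℕ,
      IsGreatest {n : ℕ | ∃ M : Set (Sym2 V), IsBMatching G b M ∧ M.ncard = n} m ∧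
      IsLeast {n : ℕ | ∃ Z : Set V, bSum b Zᶜ + (edgesIn G Z).ncard = n} m := by
  obtain ⟨M, hM, Z, hZ⟩ := strong_duality G A B hG b
  refine ⟨M.ncard, ⟨⟨M, hM, rfl⟩, ?_⟩, ⟨Z, le_antisymm hZ (weak_duality G b M hM Z)⟩, ?_⟩
  · rintro _ ⟨N, hN, rfl⟩
    exact (weak_duality G b N hN Z).trans hZ
  · rintro _ ⟨W, rfl⟩
    exact weak_duality G b M hM W
end

section
/- Let G be a finite bipartite graph and b : V(G) → ℕ. If Z ⊆ V(G) is a b-verifying set, then for every maximum b-matching M of G: (i) E[Z] ⊆ M, (ii) E[V(G) ∖ Z] ∩ M = ∅, and (iii) every M-loose vertex is contained in Z. Consequently, every edge in E[Z] is b-inevitable and every edge in E[V(G) ∖ Z] is b-forbidden. -/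
open scoped symmDiff

variable {V : Type} [Fintype V]

/-- The counting inequality behind the theorem. -/
theorem count_aux (G : SimpleGraph V) (b : V → ℕ) (Z : Set V) (M : Set (Sym2 V))
    (hM : M ⊆ G.edgeSet) :
    M.ncard + (edgesIn G Zᶜ ∩ M).ncard ≤
      bSum (fun v => {e ∈ M | v ∈ e}.ncard) Zᶜ + (edgesIn G Z ∩ M).ncard := by
  classical
  set m : Finset (Sym2 V) := M.toFinset with hm
  have hmem : ∀ e, e ∈ m ↔ e ∈ M := by intro e; simp [hm]
  have h1 : M.ncard = ∑ e ∈ m, 1 := by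
    rw [Set.ncard_eq_toFinset_card']; simp [hm]
  have h2 : ∀ X : Set V, (edgesIn G X ∩ M).ncard =
      ∑ e ∈ m, if e ∈ edgesIn G X then 1 else 0 := by
    intro X
    rw [← Finset.card_filter, ← Set.ncard_coe_finset]
    congr 1
    ext e
    simp [hmem, and_comm]
  have h3 : bSum (fun v => {e ∈ M | v ∈ e}.ncard) Zᶜ =
      ∑ e ∈ m, ∑ v ∈ Finset.univ.filter (fun v => v ∉ Z), if v ∈ e then 1 else 0 := by
    rw [Finset.sum_comm]
    unfold bSum
    rw [finsum_mem_eq_finite_toFinset_sum _ (Set.toFinite _)]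
    apply Finset.sum_congr
    · ext v; simp
    · intro v _
      rw [← Finset.card_filter, ← Set.ncard_coe_finset]
      congr 1
      ext e
      simp [hmem]
  rw [h1, h2, h2, h3, ← Finset.sum_add_distrib, ← Finset.sum_add_distrib]
  apply Finset.sum_le_sum
  intro e he
  have heG := hM ((hmem e).1 he)
  induction e using Sym2.ind with
  | _ x y =>
    have hxy : x ≠ y := G.ne_of_adj heG
    have hX : ∀ X : Set V, s(x, y) ∈ edgesIn G X ↔ x ∈ X ∧ y ∈ X := by
      intro X
      constructor
      · intro h
        exact ⟨h.2 x (by simp), h.2 y (by simp)⟩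
      · rintro ⟨h, h'⟩
        refine ⟨heG, ?_⟩
        intro v hv
        rcases Sym2.mem_iff.1 hv with rfl | rfl <;> assumption
    have hc : (∑ v ∈ Finset.univ.filter (fun v => v ∉ Z), if v ∈ s(x, y) then 1 else 0)
        = (if x ∈ Z then 0 else 1) + (if y ∈ Z then 0 else 1) := by
      have : ∀ v, (if v ∈ s(x, y) then 1 else 0) =
          (if v = x then 1 else 0) + (if v = y then 1 else 0) := by
        intro v
        simp only [Sym2.mem_iff]
        by_cases h : v = x <;> by_cases h' : v = y <;> simp_all
      simp_rw [this, Finset.sum_add_distrib, Finset.sum_ite_eq']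
      simp
    rw [hc]
    simp only [hX, Set.mem_compl_iff]
    by_cases h : x ∈ Z <;> by_cases h' : y ∈ Z <;> simp [h, h']

/-- The three structural claims for one maximum matching. -/
theorem main_aux (G : SimpleGraph V) (b : V → ℕ) (Z : Set V) (hZ : IsVerifying G b Z)
    (M : Set (Sym2 V)) (hM : IsMaxBMatching G b M) :
    edgesIn G Z ⊆ M ∧ edgesIn G Zᶜ ∩ M = ∅ ∧ ∀ v : V, IsLoose b M v → v ∈ Z := by
  classical
  obtain ⟨N, hN, hE⟩ := hZ
  have hc := count_aux G b Z M hM.1.1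
  have hNM : N.ncard ≤ M.ncard := hM.2 N hN.1
  have hle : (edgesIn G Z ∩ M).ncard ≤ (edgesIn G Z).ncard :=
    Set.ncard_le_ncard Set.inter_subset_left (Set.toFinite _)
  have hs : ∀ f : V → ℕ, bSum f Zᶜ = ∑ v ∈ (Set.toFinite Zᶜ).toFinset, f v := by
    intro f
    exact finsum_mem_eq_finite_toFinset_sum _ (Set.toFinite _)
  have hb : bSum (fun v => {e ∈ M | v ∈ e}.ncard) Zᶜ ≤ bSum b Zᶜ := by
    rw [hs, hs]
    exact Finset.sum_le_sum fun v _ => hM.1.2 v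
  have hMN : M.ncard ≤ N.ncard := hN.2 M hM.1
  refine ⟨?_, ?_, ?_⟩
  · have : edgesIn G Z ∩ M = edgesIn G Z :=
      Set.eq_of_subset_of_ncard_le Set.inter_subset_left (by omega) (Set.toFinite _)
    exact Set.inter_eq_left.1 this
  · rw [← Set.ncard_eq_zero (Set.toFinite _)]
    omega
  · intro v hv
    by_contra hvZ
    have : bSum (fun v => {e ∈ M | v ∈ e}.ncard) Zᶜ < bSum b Zᶜ := by
      rw [hs, hs]
      exact Finset.sum_lt_sum (fun v _ => hM.1.2 v) ⟨v, by simpa using hvZ, hv⟩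
    omega

/-- If `Z` is a `b`-verifying set then for every maximum `b`-matching `M`: `E[Z] ⊆ M`,
`E[Zᶜ] ∩ M = ∅`, every `M`-loose vertex lies in `Z`; consequently every edge of `E[Z]` is
`b`-inevitable and every edge of `E[Zᶜ]` is `b`-forbidden. -/
theorem stmt_2 (G : SimpleGraph V) (A B : Set V) (hG : Bipartition G A B) (b : V → ℕ)
    (Z : Set V) (hZ : IsVerifying G b Z) :
    (∀ M : Set (Sym2 V), IsMaxBMatching G b M →
      edgesIn G Z ⊆ M ∧ edgesIn G Zᶜ ∩ M = ∅ ∧ ∀ v : V, IsLoose b M v → v ∈ Z) ∧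
    (∀ e ∈ edgesIn G Z, IsInevitable G b e) ∧
    (∀ e ∈ edgesIn G Zᶜ, IsForbidden G b e) := by
  refine ⟨fun M hM => main_aux G b Z hZ M hM, ?_, ?_⟩
  · intro e he
    exact ⟨he.1, fun M hM => (main_aux G b Z hZ M hM).1 he⟩
  · intro e he
    refine ⟨he.1, fun M hM heM => ?_⟩
    have h : e ∈ edgesIn G Zᶜ ∩ M := ⟨he, heM⟩
    rw [(main_aux G b Z hZ M hM).2.1] at h
    exact h
end

section
/- Let G be a finite bipartite graph with color classes A and B, b : V(G) → ℕ, let Z be a b-verifying set, and set Z₁ := (Z ∩ A) ∪ (B ∖ Z) and Z₂ := (A ∖ Z) ∪ (Z ∩ B). Then: (i) Z₁ and Z₂ are separating, i.e., each of them is empty or a union of vertex sets of b-flexible components; (ii) every b-inconsistent flexible component hooked up by A has its vertex set contained in Z₁, and every b-inconsistent flexible component hooked up by B has its vertex set contained in Z₂; and (iii) no b-inconsistent flexible component is hooked up by both A and B. -/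
open scoped symmDiff

variable {V : Type} [Fintype V]

open Classical in
/-- Complementary slackness for a maximum `b`-matching and a verifying set. -/
lemma verifying_slack (G : SimpleGraph V) (b : V → ℕ) (Z : Set V) (hZ : IsVerifying G b Z)
    (M : Set (Sym2 V)) (hM : IsMaxBMatching G b M) :
    edgesIn G Z ⊆ M ∧ (∀ v, v ∉ Z → ¬ IsLoose b M v) ∧
    (∀ u v, s(u, v) ∈ M → u ∉ Z → v ∉ Z → False) := by
  obtain ⟨N, hN, hNc⟩ := hZ
  have hc : bSum b Zᶜ + (edgesIn G Z).ncard = M.ncard := by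
    rw [hNc]; exact le_antisymm (hM.2 N hN.1) (hN.2 M hM.1)
  set F : Finset (Sym2 V) := M.toFinset with hF
  set W : Finset V := (Zᶜ : Set V).toFinset with hW
  set E : Finset (Sym2 V) := (edgesIn G Z).toFinset with hE
  have h1 : bSum b Zᶜ = ∑ v ∈ W, b v := by
    unfold bSum
    rw [finsum_mem_eq_toFinset_sum]
  have h2 : (edgesIn G Z).ncard = E.card := Set.ncard_eq_toFinset_card' _
  have h3 : M.ncard = F.card := Set.ncard_eq_toFinset_card' _
  have hdeg : ∀ v, {e ∈ M | v ∈ e}.ncard = (F.filter (fun e => v ∈ e)).card := by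
    intro v
    rw [← Set.ncard_coe_finset]
    congr 1
    ext e; simp [hF]
  have hdc : ∑ v ∈ W, (F.filter (fun e => v ∈ e)).card
      = ∑ e ∈ F, (W.filter (fun v => v ∈ e)).card :=
    Finset.sum_card_bipartiteAbove_eq_sum_card_bipartiteBelow (fun v e => v ∈ e)
  have hFE : (F ∩ E).card = ∑ e ∈ F, (if e ∈ E then 1 else 0) := by
    rw [← Finset.filter_mem_eq_inter, Finset.card_filter]
  have hle1 : ∀ v ∈ W, (F.filter (fun e => v ∈ e)).card ≤ b v := by
    intro v _; rw [← hdeg]; exact hM.1.2 v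
  have hle2 : (F ∩ E).card ≤ E.card := Finset.card_le_card Finset.inter_subset_right
  have hge : ∀ e ∈ F, 1 ≤ (W.filter (fun v => v ∈ e)).card + (if e ∈ E then 1 else 0) := by
    intro e he
    by_cases h : e ∈ E
    · simp [h]
    · have heM : e ∈ M := by simpa [hF] using he
      have : ∃ v ∈ e, v ∉ Z := by
        by_contra hcon
        push Not at hcon
        exact h (by simp only [hE, Set.mem_toFinset]; exact ⟨hM.1.1 heM, hcon⟩)
      obtain ⟨v, hv, hvZ⟩ := this
      have : 0 < (W.filter (fun v => v ∈ e)).card :=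
        Finset.card_pos.2 ⟨v, by simp [hW, hv, hvZ]⟩
      omega
  have s1 := Finset.sum_le_sum hle1
  have s2 := Finset.sum_le_sum hge
  rw [Finset.sum_add_distrib, ← hdc, ← hFE] at s2
  simp only [Finset.sum_const, smul_eq_mul, mul_one] at s2
  refine ⟨?_, ?_, ?_⟩
  · have : (F ∩ E) = E := Finset.eq_of_subset_of_card_le Finset.inter_subset_right (by omega)
    intro e he
    have : e ∈ F ∩ E := by rw [this]; simpa [hE] using he
    simpa [hF] using (Finset.mem_inter.1 this).1
  · intro v hv hl
    have : ∑ v ∈ W, (F.filter (fun e => v ∈ e)).card < ∑ v ∈ W, b v :=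
      Finset.sum_lt_sum hle1 ⟨v, by simpa [hW] using hv, by rw [← hdeg]; exact hl⟩
    omega
  · intro u v he hu hv
    have hne : u ≠ v := ((G.mem_edgeSet).1 (hM.1.1 he)).ne
    have h2 : 1 < (W.filter (fun w => w ∈ s(u, v))).card :=
      Finset.one_lt_card.2 ⟨u, by simp [hW, hu], v, by simp [hW, hv], hne⟩
    have := Finset.sum_lt_sum hge ⟨s(u, v), by simpa [hF] using he, by omega⟩
    rw [Finset.sum_add_distrib, ← hdc, ← hFE] at this
    simp only [Finset.sum_const, smul_eq_mul, mul_one] at this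
    omega

/-- A flexible edge joins `Z` to its complement. -/
lemma flex_cross (G : SimpleGraph V) (b : V → ℕ) (Z : Set V) (hZ : IsVerifying G b Z)
    (u v : V) (h : (flexGraph G b).Adj u v) : G.Adj u v ∧ (u ∈ Z ↔ v ∉ Z) := by
  obtain ⟨⟨M, hM, he⟩, ⟨N, hN, hne⟩⟩ := h
  have ha : G.Adj u v := (G.mem_edgeSet).1 (hM.1.1 he)
  refine ⟨ha, fun hu hv => hne ?_, fun hv => ?_⟩
  · apply (verifying_slack G b Z hZ N hN).1
    refine ⟨ha, ?_⟩
    intro w hw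
    rcases Sym2.mem_iff.1 hw with rfl | rfl <;> assumption
  · by_contra hu
    exact (verifying_slack G b Z hZ M hM).2.2 u v he hu hv

lemma separating_of_closed (G : SimpleGraph V) (b : V → ℕ) (X : Set V)
    (h : ∀ u v, (flexGraph G b).Reachable u v → u ∈ X → v ∈ X) : IsSeparating G b X := by
  refine ⟨{c | c.supp ⊆ X}, ?_⟩
  ext v
  simp only [Set.mem_iUnion, Set.mem_ofPred_eq, exists_prop]
  constructor
  · intro hv
    refine ⟨(flexGraph G b).connectedComponentMk v, ?_, rfl⟩
    intro w hw
    exact h v w (SimpleGraph.ConnectedComponent.exact hw).symm hv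
  · rintro ⟨c, hc, hv⟩
    exact hc hv

lemma Bipartition.swap {G : SimpleGraph V} {A B : Set V} (h : Bipartition G A B) :
    Bipartition G B A :=
  ⟨h.disjoint.symm, by rw [Set.union_comm]; exact h.cover, fun _ _ e => (h.between e).symm⟩

lemma closed_Z (G : SimpleGraph V) (A B : Set V) (hG : Bipartition G A B) (b : V → ℕ)
    (Z : Set V) (hZ : IsVerifying G b Z) (u v : V) (h : (flexGraph G b).Reachable u v)
    (hu : u ∈ (Z ∩ A) ∪ (B \ Z)) : v ∈ (Z ∩ A) ∪ (B \ Z) := by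
  obtain ⟨p⟩ := h
  induction p with
  | nil => exact hu
  | @cons x y z hxy p ih =>
    apply ih
    obtain ⟨ha, hz⟩ := flex_cross G b Z hZ _ _ hxy
    have hd : ∀ w, w ∈ A → w ∈ B → False := fun w h1 h2 => Set.disjoint_left.1 hG.disjoint h1 h2
    have hb := hG.between ha
    have := hd x
    simp only [Set.mem_union, Set.mem_inter_iff, Set.mem_sdiff] at hu ⊢
    tauto

lemma hooked_sub (G : SimpleGraph V) (A B : Set V) (hG : Bipartition G A B) (b : V → ℕ)
    (Z : Set V) (hZ : IsVerifying G b Z) (c : FlexComp G b) (hc : HookedUp G b A c) :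
    c.supp ⊆ (Z ∩ A) ∪ (B \ Z) := by
  have hD : ∀ v ∈ Dset G b, v ∈ Z := by
    rintro v ⟨M, hM, hl⟩
    by_contra hv
    exact (verifying_slack G b Z hZ M hM).2.1 v hv hl
  rcases hc with ⟨v, ⟨hv, hvA⟩, hvD⟩ | ⟨v, hv, hb, u, ⟨huD, huA⟩, ha⟩
  · intro w hw
    refine closed_Z G A B hG b Z hZ v w ?_ (Or.inl ⟨hD v hvD, hvA⟩)
    exact SimpleGraph.ConnectedComponent.exact (hv.trans hw.symm)
  · rw [hv]
    rintro _ rfl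
    rename_i w
    have hwB : w ∈ B := by
      rcases hG.between ha with h | h
      · exact absurd h.2 (Set.disjoint_left.1 hG.disjoint huA)
      · exact h.1
    refine Or.inr ⟨hwB, fun hwZ => ?_⟩
    have huZ := hD u huD
    obtain ⟨M, hM, -⟩ := id hZ
    have he : s(w, u) ∈ M := by
      apply (verifying_slack G b Z hZ M hM).1
      refine ⟨ha, ?_⟩
      intro x hx
      rcases Sym2.mem_iff.1 hx with rfl | rfl <;> assumption
    have h0 := hM.1.2 w
    rw [hb, Nat.le_zero, Set.ncard_eq_zero (Set.toFinite _)] at h0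
    have : s(w, u) ∈ ({e ∈ M | w ∈ e} : Set (Sym2 V)) := ⟨he, by simp⟩
    rw [h0] at this
    exact this

/-- For a `b`-verifying set `Z`, with `Z₁ = (Z ∩ A) ∪ (B ∖ Z)` and `Z₂ = (A ∖ Z) ∪ (Z ∩ B)`:
`Z₁` and `Z₂` are separating; every inconsistent flexible component hooked up by `A`
(resp. `B`) has vertex set inside `Z₁` (resp. `Z₂`); and no inconsistent flexible
component is hooked up by both `A` and `B`. -/
theorem stmt_4 (G : SimpleGraph V) (A B : Set V) (hG : Bipartition G A B) (b : V → ℕ)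
    (Z : Set V) (hZ : IsVerifying G b Z) :
    IsSeparating G b ((Z ∩ A) ∪ (B \ Z)) ∧
    IsSeparating G b ((A \ Z) ∪ (Z ∩ B)) ∧
    (∀ c : FlexComp G b, HookedUp G b A c → c.supp ⊆ (Z ∩ A) ∪ (B \ Z)) ∧
    (∀ c : FlexComp G b, HookedUp G b B c → c.supp ⊆ (A \ Z) ∪ (Z ∩ B)) ∧
    (∀ c : FlexComp G b, ¬ (HookedUp G b A c ∧ HookedUp G b B c)) := by
  have e2 : (A \ Z) ∪ (Z ∩ B) = (Z ∩ B) ∪ (A \ Z) := Set.union_comm _ _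
  have hA := hooked_sub G A B hG b Z hZ
  have hB := hooked_sub G B A hG.swap b Z hZ
  rw [e2]
  refine ⟨separating_of_closed G b _ (closed_Z G A B hG b Z hZ),
    separating_of_closed G b _ (closed_Z G B A hG.swap b Z hZ), hA, hB, ?_⟩
  rintro c ⟨h1, h2⟩
  obtain ⟨v, hv⟩ := c.nonempty_supp
  have h3 := hA c h1 hv
  have h4 := hB c h2 hv
  have hd : v ∈ A → v ∈ B → False := fun h1 h2 => Set.disjoint_left.1 hG.disjoint h1 h2
  simp only [Set.mem_union, Set.mem_inter_iff, Set.mem_sdiff] at h3 h4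
  tauto
end

section
/- Let G be a finite bipartite graph, b : V(G) → ℕ, M a maximum b-matching of G, and v an M-loose vertex. If P is an M-wedge path from a vertex u to the vertex v, then the symmetric difference M △ E(P) is also a maximum b-matching of G, and all edges of P lie in the same b-flexible component. -/
open scoped symmDiff

variable {V : Type} [Fintype V]

lemma aux_deg {G : SimpleGraph V} {x y : V} (p : G.Walk x y) (hp : p.IsPath) :
    {e : Sym2 V | e ∈ p.edges ∧ x ∈ e}.ncard ≤ 1 ∧
    ∀ w, {e : Sym2 V | e ∈ p.edges ∧ w ∈ e}.ncard ≤ 2 := by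
  induction p with
  | nil => simp
  | @cons x z y h q ih =>
    rw [SimpleGraph.Walk.cons_isPath_iff] at hp
    obtain ⟨ih1, ih2⟩ := ih hp.1
    have hx : {e : Sym2 V | e ∈ (SimpleGraph.Walk.cons h q).edges ∧ x ∈ e} ⊆ {s(x, z)} := by
      rintro e ⟨he, hxe⟩
      rw [SimpleGraph.Walk.edges_cons, List.mem_cons] at he
      rcases he with he | he
      · exact he
      · exact absurd (SimpleGraph.Walk.mem_support_of_mem_edges he hxe) hp.2
    have hx1 := Set.ncard_le_ncard hx (Set.toFinite _)
    rw [Set.ncard_singleton] at hx1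
    refine ⟨hx1, fun w => ?_⟩
    by_cases hwx : w = x
    · subst hwx; omega
    by_cases hwz : w = z
    · subst hwz
      have h1 : {e : Sym2 V | e ∈ (SimpleGraph.Walk.cons h q).edges ∧ w ∈ e} ⊆
          insert s(x, w) {e : Sym2 V | e ∈ q.edges ∧ w ∈ e} := by
        rintro e ⟨he, hwe⟩
        rw [SimpleGraph.Walk.edges_cons, List.mem_cons] at he
        rcases he with he | he
        · exact Or.inl he
        · exact Or.inr ⟨he, hwe⟩
      have h2 := Set.ncard_le_ncard h1 (Set.toFinite _)
      have h3 := Set.ncard_insert_le s(x, w) {e : Sym2 V | e ∈ q.edges ∧ w ∈ e}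
      omega
    · refine (Set.ncard_le_ncard ?_ (Set.toFinite _)).trans (ih2 w)
      rintro e ⟨he, hwe⟩
      rw [SimpleGraph.Walk.edges_cons, List.mem_cons] at he
      rcases he with he | he
      · subst he
        simp [hwx, hwz] at hwe
      · exact ⟨he, hwe⟩

lemma aux_count {G : SimpleGraph V} (M : Set (Sym2 V)) {x y : V} (p : G.Walk x y)
    (hp : IsWedgePath M p) :
    {e : Sym2 V | e ∈ p.edges}.ncard = 2 * {e : Sym2 V | e ∈ p.edges ∧ e ∈ M}.ncard := by
  classical
  obtain ⟨hp, h1, h0⟩ := hp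
  set F : Finset (Sym2 V) := p.edges.toFinset.filter (· ∈ M) with hF
  set S : Finset V := p.support.toFinset with hS
  have hE : {e : Sym2 V | e ∈ p.edges}.ncard = p.length := by
    have : {e : Sym2 V | e ∈ p.edges} = (p.edges.toFinset : Set (Sym2 V)) := by ext; simp
    rw [this, Set.ncard_coe_finset, List.toFinset_card_of_nodup hp.isTrail.edges_nodup,
      SimpleGraph.Walk.length_edges]
  have hFc : {e : Sym2 V | e ∈ p.edges ∧ e ∈ M}.ncard = F.card := by
    have : {e : Sym2 V | e ∈ p.edges ∧ e ∈ M} = (F : Set (Sym2 V)) := by ext; simp [hF]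
    rw [this, Set.ncard_coe_finset]
  have hSc : S.card = p.length + 1 := by
    rw [hS, List.toFinset_card_of_nodup hp.support_nodup, SimpleGraph.Walk.length_support]
  have hdeg : ∀ w, (F.filter (w ∈ ·)).card = edgeDeg p.edges M w := by
    intro w
    have : {e : Sym2 V | e ∈ p.edges ∧ w ∈ e ∧ e ∈ M} =
        ((F.filter (w ∈ ·) : Finset (Sym2 V)) : Set (Sym2 V)) := by
      ext; simp [hF]; tauto
    rw [edgeDeg, this, Set.ncard_coe_finset]
  have hyS : y ∈ S := by simp [hS]
  have hsum : ∑ w ∈ S, (F.filter (w ∈ ·)).card = p.length := by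
    rw [← Finset.add_sum_erase S _ hyS, hdeg, h0, Finset.sum_congr rfl (g := fun _ => 1)]
    · simp [Finset.card_erase_of_mem hyS, hSc]
    · intro w hw
      rw [Finset.mem_erase] at hw
      rw [hdeg]
      exact h1 w (by simpa [hS] using hw.2) hw.1
  have hsum2 : ∑ e ∈ F, (S.filter (· ∈ e)).card = 2 * F.card := by
    rw [Finset.sum_congr rfl (g := fun _ => 2)]
    · simp [mul_comm]
    · intro e he
      have he' : e ∈ p.edges := by
        simp [hF] at he; exact he.1
      induction e with
      | _ a c =>
        have hac : a ≠ c := (p.adj_of_mem_edges he').ne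
        have : S.filter (· ∈ s(a, c)) = {a, c} := by
          ext w
          simp only [Finset.mem_filter, Sym2.mem_iff, Finset.mem_insert, Finset.mem_singleton, hS,
            List.mem_toFinset]
          constructor
          · exact fun h => h.2
          · intro h
            exact ⟨SimpleGraph.Walk.mem_support_of_mem_edges he' (by simpa using h), h⟩
        rw [this, Finset.card_pair hac]
  have := Finset.sum_card_bipartiteAbove_eq_sum_card_bipartiteBelow (s := S) (t := F)
    (fun w e => w ∈ e)
  simp only [Finset.bipartiteAbove, Finset.bipartiteBelow] at this
  rw [hE, hFc, ← hsum, ← hsum2, this]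

lemma aux_symm (M P : Set (Sym2 V)) :
    (M ∆ P).ncard + (P ∩ M).ncard = M.ncard + (P \ M).ncard := by
  have h1 : (M ∆ P).ncard = (M \ P).ncard + (P \ M).ncard := by
    rw [Set.symmDiff_def]
    exact Set.ncard_union_eq (by
      rw [Set.disjoint_left]; rintro e ⟨_, h⟩ ⟨h', _⟩; exact h h')
      (Set.toFinite _) (Set.toFinite _)
  have h2 := Set.ncard_inter_add_ncard_diff_eq_ncard M P (Set.toFinite _)
  rw [Set.inter_comm] at h2
  omega

lemma aux_max (G : SimpleGraph V) (b : V → ℕ)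
    (M : Set (Sym2 V)) (hM : IsMaxBMatching G b M)
    (u v : V) (hv : IsLoose b M v) (p : G.Walk u v) (hp : IsWedgePath M p) :
    IsMaxBMatching G b (M ∆ {e : Sym2 V | e ∈ p.edges}) := by
  set P : Set (Sym2 V) := {e : Sym2 V | e ∈ p.edges} with hP
  have hcard : (M ∆ P).ncard = M.ncard := by
    have h1 := aux_symm M P
    have h2 : P.ncard = 2 * (P ∩ M).ncard := aux_count M p hp
    have h3 := Set.ncard_inter_add_ncard_diff_eq_ncard P M (Set.toFinite _)
    omega
  refine ⟨⟨?_, fun w => ?_⟩, fun N hN => hcard ▸ hM.2 N hN⟩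
  · rintro e (⟨he, _⟩ | ⟨he, _⟩)
    · exact hM.1.1 he
    · exact p.edges_subset_edgeSet he
  · have hs : {e ∈ M ∆ P | w ∈ e} = {e ∈ M | w ∈ e} ∆ {e | e ∈ p.edges ∧ w ∈ e} := by
      ext e
      simp only [Set.mem_symmDiff, Set.mem_setOf_eq, hP]
      tauto
    have h1 := aux_symm {e ∈ M | w ∈ e} {e | e ∈ p.edges ∧ w ∈ e}
    rw [← hs] at h1
    have hi : {e | e ∈ p.edges ∧ w ∈ e} ∩ {e ∈ M | w ∈ e} =
        {e : Sym2 V | e ∈ p.edges ∧ w ∈ e ∧ e ∈ M} := by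
      ext e
      simp only [Set.mem_inter_iff, Set.mem_setOf_eq]
      tauto
    have hi' : ({e | e ∈ p.edges ∧ w ∈ e} ∩ {e ∈ M | w ∈ e}).ncard = edgeDeg p.edges M w := by
      rw [hi, edgeDeg]
    have h3 := Set.ncard_inter_add_ncard_diff_eq_ncard {e | e ∈ p.edges ∧ w ∈ e}
      {e ∈ M | w ∈ e} (Set.toFinite _)
    have hb := hM.1.2 w
    by_cases hwv : w = v
    · subst hwv
      have hd := (aux_deg p.reverse hp.1.reverse).1
      simp only [SimpleGraph.Walk.edges_reverse, List.mem_reverse] at hd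
      have := hp.2.2
      unfold IsLoose at hv
      omega
    · have hd := (aux_deg p hp.1).2 w
      by_cases hws : w ∈ p.support
      · have := hp.2.1 w hws hwv
        omega
      · have : {e | e ∈ p.edges ∧ w ∈ e} = ∅ := by
          ext e
          simp only [Set.mem_setOf_eq, Set.mem_empty_iff_false, iff_false]
          exact fun h => hws (SimpleGraph.Walk.mem_support_of_mem_edges h.1 h.2)
        rw [this, Set.ncard_empty] at h3
        rw [this] at h1
        simp at h1
        omega

/-- If `M` is a maximum `b`-matching, `v` is `M`-loose, and `p` is an `M`-wedge path from
`u` to `v`, then `M △ E(p)` is also a maximum `b`-matching, and all edges of `p` lie in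
the same `b`-flexible component. -/
theorem stmt_5 (G : SimpleGraph V) (A B : Set V) (hG : Bipartition G A B) (b : V → ℕ)
    (M : Set (Sym2 V)) (hM : IsMaxBMatching G b M)
    (u v : V) (hv : IsLoose b M v) (p : G.Walk u v) (hp : IsWedgePath M p) :
    IsMaxBMatching G b (M ∆ {e : Sym2 V | e ∈ p.edges}) ∧
    ∃ c : FlexComp G b, ∀ e ∈ p.edges, ∀ w ∈ e, w ∈ c.supp := by
  classical
  have hN := aux_max G b M hM u v hv p hp
  refine ⟨hN, (flexGraph G b).connectedComponentMk u, fun e he w hw => ?_⟩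
  have hflex : ∀ e ∈ p.edges, e ∈ (flexGraph G b).edgeSet := by
    intro e he
    have key : IsFlexibleEdge G b e := by
      by_cases heM : e ∈ M
      · exact ⟨⟨M, hM, heM⟩, _, hN, by simp [Set.mem_symmDiff, heM, he]⟩
      · exact ⟨⟨_, hN, by simp [Set.mem_symmDiff, heM, he]⟩, M, hM, heM⟩
    induction e with
    | _ a c => exact key
  have hws := SimpleGraph.Walk.mem_support_of_mem_edges he hw
  rw [SimpleGraph.ConnectedComponent.mem_supp_iff, SimpleGraph.ConnectedComponent.eq]
  have hws' : w ∈ (p.transfer (flexGraph G b) hflex).support := by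
    rwa [SimpleGraph.Walk.support_transfer]
  exact ((p.transfer (flexGraph G b) hflex).takeUntil w hws').reachable.symm
end

section
/- Let G be a finite bipartite graph with color classes A and B, b : V(G) → ℕ, and M a maximum b-matching of G. Let U_A be the set of M-loose vertices in A, let S_A ⊆ A be the set of vertices from which there exists an M-wedge path to some vertex of U_A, and let T_A ⊆ B be the set of vertices between which and some vertex of U_A there exists an M-exposed path. Then: (i) S_A ∪ (B ∖ T_A) is a b-verifying set; (ii) S_A = D(G;b) ∩ A; and consequently S_A ∪ T_A is the disjoint union of the vertex sets of all b-inconsistent flexible components hooked up by A. -/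
open scoped symmDiff

variable {V : Type} [Fintype V]

/-- directed walk -/
def DirW {G : SimpleGraph V} (A : Set V) (M : Set (Sym2 V)) {x y : V} (p : G.Walk x y) : Prop :=
  ∀ d ∈ p.darts, (d.fst ∈ A ↔ s(d.fst, d.snd) ∈ M)

theorem Bipartition.notA {G : SimpleGraph V} {A B : Set V} (hG : Bipartition G A B) {v : V} :
    v ∉ A ↔ v ∈ B := by
  have h1 := hG.disjoint
  have h2 : v ∈ A ∪ B := by rw [hG.cover]; trivial
  constructor
  · intro h; exact h2.resolve_left h
  · intro h h'; exact Set.disjoint_left.mp h1 h' h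

theorem Bipartition.adjA {G : SimpleGraph V} {A B : Set V} (hG : Bipartition G A B) {u v : V}
    (h : G.Adj u v) : u ∈ A ↔ v ∉ A := by
  have h1 := hG.between h
  have := hG.notA (v := v)
  have := hG.notA (v := u)
  tauto

theorem edgeDeg_notin {G : SimpleGraph V} (M : Set (Sym2 V)) {x y w : V} (p : G.Walk x y)
    (hw : w ∉ p.support) : edgeDeg p.edges M w = 0 := by
  unfold edgeDeg
  rw [Set.ncard_eq_zero]
  ext e
  simp only [Set.mem_setOf_eq, Set.mem_empty_iff_false, iff_false]
  rintro ⟨h1, h2, -⟩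
  exact hw (p.mem_support_of_mem_edges h1 h2)

open Classical in
theorem edgeDeg_cons {G : SimpleGraph V} (M : Set (Sym2 V)) {x v y w : V} (h : G.Adj x v)
    (p : G.Walk v y) (hx : x ∉ p.support) :
    edgeDeg (SimpleGraph.Walk.cons h p).edges M w =
      (if (w = x ∨ w = v) ∧ s(x, v) ∈ M then 1 else 0) + edgeDeg p.edges M w := by
  unfold edgeDeg
  have hne : s(x, v) ∉ p.edges := fun h' => hx (p.fst_mem_support_of_mem_edges h')
  split_ifs with hc
  · have : {e : Sym2 V | e ∈ (SimpleGraph.Walk.cons h p).edges ∧ w ∈ e ∧ e ∈ M} =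
      insert s(x, v) {e : Sym2 V | e ∈ p.edges ∧ w ∈ e ∧ e ∈ M} := by
      ext e
      simp only [SimpleGraph.Walk.edges_cons, List.mem_cons, Set.mem_setOf_eq, Set.mem_insert_iff]
      constructor
      · rintro ⟨h1 | h1, h2⟩
        · exact Or.inl h1
        · exact Or.inr ⟨h1, h2⟩
      · rintro (h1 | h1)
        · subst h1
          exact ⟨Or.inl rfl, by simpa using hc.1, hc.2⟩
        · exact ⟨Or.inr h1.1, h1.2⟩
    rw [this, Set.ncard_insert_of_notMem (fun h' => hne h'.1)]
    omega
  · rw [zero_add]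
    congr 1
    ext e
    simp only [SimpleGraph.Walk.edges_cons, List.mem_cons, Set.mem_setOf_eq]
    constructor
    · rintro ⟨h1 | h1, h2⟩
      · subst h1
        exact absurd ⟨by simpa using h2.1, h2.2⟩ hc
      · exact ⟨h1, h2⟩
    · rintro h1
      exact ⟨Or.inr h1.1, h1.2⟩

theorem edgeDeg_nil {G : SimpleGraph V} (M : Set (Sym2 V)) {x w : V} :
    edgeDeg (SimpleGraph.Walk.nil : G.Walk x x).edges M w = 0 := by
  simp [edgeDeg]

theorem dirW_cons {G : SimpleGraph V} (A : Set V) (M : Set (Sym2 V)) {x v y : V} (h : G.Adj x v)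
    (p : G.Walk v y) : DirW A M (SimpleGraph.Walk.cons h p) ↔
      (x ∈ A ↔ s(x, v) ∈ M) ∧ DirW A M p := by
  simp [DirW]

open Classical in
theorem wedge_aux {G : SimpleGraph V} {A B : Set V} (hG : Bipartition G A B) (M : Set (Sym2 V))
    {x z : V} (p : G.Walk x z) (hz : z ∈ A) (hp : p.IsPath) :
    (x ∈ A → ((∀ w ∈ p.support, edgeDeg p.edges M w = if w = z then 0 else 1) ↔ DirW A M p)) ∧
    (x ∉ A → ((∀ w ∈ p.support, edgeDeg p.edges M w = if w = z ∨ w = x then 0 else 1)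
      ↔ DirW A M p)) := by
  induction p with
  | nil => simp [hz, edgeDeg, DirW]
  | @cons x v z h p ih =>
    rw [SimpleGraph.Walk.cons_isPath_iff] at hp
    obtain ⟨hp, hx⟩ := hp
    have ih := ih hz hp
    have hA := hG.adjA h
    have h0 := edgeDeg_notin M p hx
    have hxz : x ≠ z := fun h' => hx (h' ▸ p.end_mem_support)
    have hxv : x ≠ v := h.ne
    have hvs := p.start_mem_support
    rw [dirW_cons]
    simp only [edgeDeg_cons M h p hx, SimpleGraph.Walk.support_cons, List.mem_cons,
      forall_eq_or_imp, h0]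
    constructor
    · intro hxA
      have hv := hA.1 hxA
      have hvz : v ≠ z := fun h' => hv (h' ▸ hz)
      rw [← ih.2 hv]
      simp only [hxA, true_iff, hxz, if_false, true_or, true_and, add_zero]
      constructor
      · rintro ⟨h1, h2⟩
        have he : s(x, v) ∈ M := by by_contra h'; simp [h'] at h1
        refine ⟨he, fun w hw => ?_⟩
        have := h2 w hw
        have hwx : w ≠ x := fun h' => hx (h' ▸ hw)
        by_cases hwv : w = v
        · subst hwv; simp [he, hvz] at this ⊢; omega
        · simp [hwx, hwv] at this ⊢; exact this
      · rintro ⟨he, h2⟩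
        refine ⟨by simp [he], fun w hw => ?_⟩
        have := h2 w hw
        have hwx : w ≠ x := fun h' => hx (h' ▸ hw)
        by_cases hwv : w = v
        · subst hwv; simp [he, hvz] at this ⊢; omega
        · simp [hwx, hwv] at this ⊢; exact this
    · intro hxA
      have hv : v ∈ A := by tauto
      rw [← ih.1 hv]
      simp only [hxA, false_iff, true_or, or_true, if_true, true_and, add_zero]
      constructor
      · rintro ⟨h1, h2⟩
        have he : s(x, v) ∉ M := by intro h'; simp [h'] at h1
        refine ⟨he, fun w hw => ?_⟩
        have := h2 w hw
        have hwx : w ≠ x := fun h' => hx (h' ▸ hw)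
        simpa [he, hwx] using this
      · rintro ⟨he, h2⟩
        refine ⟨by simp [he], fun w hw => ?_⟩
        have := h2 w hw
        have hwx : w ≠ x := fun h' => hx (h' ▸ hw)
        simpa [he, hwx] using this

open Classical in
theorem exposed_aux {G : SimpleGraph V} {A B : Set V} (hG : Bipartition G A B) (M : Set (Sym2 V))
    {x z : V} (p : G.Walk x z) (hz : z ∈ A) (hp : p.IsPath) :
    (x ∉ A → ((∀ w ∈ p.support, edgeDeg p.edges Mᶜ w = 1) ↔ DirW A M p)) ∧
    (x ∈ A → ((∀ w ∈ p.support, edgeDeg p.edges Mᶜ w = if w = x then 0 else 1)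
      ↔ DirW A M p)) := by
  induction p with
  | nil => simp [hz, edgeDeg, DirW]
  | @cons x v z h p ih =>
    rw [SimpleGraph.Walk.cons_isPath_iff] at hp
    obtain ⟨hp, hx⟩ := hp
    have ih := ih hz hp
    have hA := hG.adjA h
    have h0 := edgeDeg_notin Mᶜ p hx
    have hxv : x ≠ v := h.ne
    have hvs := p.start_mem_support
    rw [dirW_cons]
    simp only [edgeDeg_cons Mᶜ h p hx, SimpleGraph.Walk.support_cons, List.mem_cons,
      forall_eq_or_imp, h0]
    constructor
    · intro hxA
      have hv : v ∈ A := by tauto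
      rw [← ih.2 hv]
      simp only [hxA, false_iff, true_or, true_and, add_zero]
      constructor
      · rintro ⟨h1, h2⟩
        have he : s(x, v) ∉ M := by intro h'; simp [h'] at h1
        refine ⟨he, fun w hw => ?_⟩
        have := h2 w hw
        have hwx : w ≠ x := fun h' => hx (h' ▸ hw)
        by_cases hwv : w = v
        · subst hwv; simp [he] at this ⊢; omega
        · simp [hwx, hwv] at this ⊢; exact this
      · rintro ⟨he, h2⟩
        refine ⟨by simp [he], fun w hw => ?_⟩
        have := h2 w hw
        have hwx : w ≠ x := fun h' => hx (h' ▸ hw)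
        by_cases hwv : w = v
        · subst hwv; simp [he] at this ⊢; omega
        · simp [hwx, hwv] at this ⊢; exact this
    · intro hxA
      have hv : v ∉ A := by tauto
      rw [← ih.1 hv]
      simp only [hxA, true_iff, true_or, if_true, true_and, add_zero]
      constructor
      · rintro ⟨h1, h2⟩
        have he : s(x, v) ∈ M := by by_contra h'; simp [h'] at h1
        refine ⟨he, fun w hw => ?_⟩
        have := h2 w hw
        have hwx : w ≠ x := fun h' => hx (h' ▸ hw)
        simpa [he, hwx] using this
      · rintro ⟨he, h2⟩
        refine ⟨by simp [he], fun w hw => ?_⟩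
        have := h2 w hw
        have hwx : w ≠ x := fun h' => hx (h' ▸ hw)
        simpa [he, hwx] using this

theorem wedge_iff {G : SimpleGraph V} {A B : Set V} (hG : Bipartition G A B) (M : Set (Sym2 V))
    {x z : V} (p : G.Walk x z) (hz : z ∈ A) (hx : x ∈ A) :
    IsWedgePath M p ↔ p.IsPath ∧ DirW A M p := by
  classical
  unfold IsWedgePath
  refine and_congr_right fun hp => ?_
  rw [← (wedge_aux hG M p hz hp).1 hx]
  constructor
  · rintro ⟨h1, h2⟩ w hw
    split_ifs with h
    · rw [h, h2]
    · exact h1 w hw h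
  · intro h
    refine ⟨fun v hv hne => ?_, ?_⟩
    · simpa [hne] using h v hv
    · simpa using h z p.end_mem_support

theorem exposed_iff {G : SimpleGraph V} {A B : Set V} (hG : Bipartition G A B) (M : Set (Sym2 V))
    {x z : V} (p : G.Walk x z) (hz : z ∈ A) (hx : x ∉ A) :
    IsExposedPath M p ↔ p.IsPath ∧ DirW A M p :=
  and_congr_right fun hp => (exposed_aux hG M p hz hp).1 hx

/-- `x` reaches `U` by a directed path. -/
def Reach (G : SimpleGraph V) (A : Set V) (M : Set (Sym2 V)) (U : Set V) (x : V) : Prop :=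
  ∃ z ∈ U, ∃ p : G.Walk x z, p.IsPath ∧ DirW A M p

theorem reach_cons {G : SimpleGraph V} {A : Set V} {M : Set (Sym2 V)} {U : Set V} {x v : V}
    (h : G.Adj x v) (hs : x ∈ A ↔ s(x, v) ∈ M) (hv : Reach G A M U v) : Reach G A M U x := by
  classical
  obtain ⟨z, hz, p, hp, hd⟩ := hv
  refine ⟨z, hz, (SimpleGraph.Walk.cons h p).bypass, SimpleGraph.Walk.bypass_isPath _, ?_⟩
  have : DirW A M (SimpleGraph.Walk.cons h p) := (dirW_cons A M h p).2 ⟨hs, hd⟩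
  exact fun d hd' => this d (SimpleGraph.Walk.darts_bypass_subset _ hd')

open Classical in
theorem deg_insert {N : Set (Sym2 V)} {x v : V} (he : s(x, v) ∉ N) (w : V) :
    {e ∈ insert s(x, v) N | w ∈ e}.ncard =
      {e ∈ N | w ∈ e}.ncard + if w = x ∨ w = v then 1 else 0 := by
  split_ifs with h
  · have : {e ∈ insert s(x, v) N | w ∈ e} = insert s(x, v) {e ∈ N | w ∈ e} := by
      ext e
      simp only [Set.mem_insert_iff, Set.mem_setOf_eq]
      constructor
      · rintro ⟨h1 | h1, h2⟩
        · exact Or.inl h1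
        · exact Or.inr ⟨h1, h2⟩
      · rintro (h1 | h1)
        · subst h1; exact ⟨Or.inl rfl, by simpa using h⟩
        · exact ⟨Or.inr h1.1, h1.2⟩
    rw [this, Set.ncard_insert_of_notMem (fun h' => he h'.1)]
  · rw [add_zero]
    congr 1
    ext e
    simp only [Set.mem_insert_iff, Set.mem_setOf_eq]
    constructor
    · rintro ⟨h1 | h1, h2⟩
      · subst h1; exact absurd (by simpa using h2) h
      · exact ⟨h1, h2⟩
    · rintro h1
      exact ⟨Or.inr h1.1, h1.2⟩

open Classical in
theorem deg_remove {N : Set (Sym2 V)} {x v : V} (he : s(x, v) ∈ N) (w : V) :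
    {e ∈ N \ {s(x, v)} | w ∈ e}.ncard + (if w = x ∨ w = v then 1 else 0) =
      {e ∈ N | w ∈ e}.ncard := by
  have := deg_insert (N := N \ {s(x, v)}) (x := x) (v := v) (by simp) w
  rw [← this, Set.insert_diff_singleton, Set.insert_eq_of_mem he]

open Classical in
theorem augment {G : SimpleGraph V} {A B : Set V} (hG : Bipartition G A B) {M : Set (Sym2 V)}
    (hM : M ⊆ G.edgeSet) {x z : V} (p : G.Walk x z) (hz : z ∈ A) (hp : p.IsPath)
    (hd : DirW A M p) :
    ∃ N : Set (Sym2 V), N ⊆ G.edgeSet ∧ (∀ e ∉ p.edges, (e ∈ N ↔ e ∈ M)) ∧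
    (x ∈ A → N.ncard = M.ncard ∧ ∀ w, {e ∈ N | w ∈ e}.ncard + (if w = x then 1 else 0) =
      {e ∈ M | w ∈ e}.ncard + if w = z then 1 else 0) ∧
    (x ∉ A → N.ncard = M.ncard + 1 ∧ ∀ w, {e ∈ N | w ∈ e}.ncard =
      {e ∈ M | w ∈ e}.ncard + (if w = z then 1 else 0) + (if w = x then 1 else 0)) := by
  induction p with
  | nil => exact ⟨M, hM, by simp, by simp, fun h => absurd hz h⟩
  | @cons x v z h p ih =>
    rw [SimpleGraph.Walk.cons_isPath_iff] at hp
    obtain ⟨hp, hx⟩ := hp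
    rw [dirW_cons] at hd
    obtain ⟨N, hN, hNe, h1, h2⟩ := ih hz hp hd.2
    have hA := hG.adjA h
    have hxv : x ≠ v := h.ne
    have hne : s(x, v) ∉ p.edges := fun h' => hx (p.fst_mem_support_of_mem_edges h')
    by_cases hxA : x ∈ A
    · have hv := hA.1 hxA
      have he : s(x, v) ∈ N := (hNe _ hne).2 (hd.1.1 hxA)
      obtain ⟨h3, h4⟩ := h2 hv
      refine ⟨N \ {s(x, v)}, Set.diff_subset.trans hN, ?_, fun _ => ⟨?_, fun w => ?_⟩,
        fun h' => absurd hxA h'⟩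
      · intro e he'
        simp only [SimpleGraph.Walk.edges_cons, List.mem_cons, not_or] at he'
        simp [he'.1, hNe e he'.2]
      · have := Set.ncard_diff_singleton_add_one he
        omega
      · have h5 := deg_remove he w
        have h6 := h4 w
        by_cases hwx : w = x
        · subst hwx; simp [hxv] at h5 h6 ⊢; omega
        · simp [hwx] at h5 h6 ⊢; omega
    · have hv : v ∈ A := by tauto
      have he : s(x, v) ∉ N := fun h' => hxA (hd.1.2 ((hNe _ hne).1 h'))
      obtain ⟨h3, h4⟩ := h1 hv
      refine ⟨insert s(x, v) N, Set.insert_subset h hN, ?_, fun h' => absurd h' hxA,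
        fun _ => ⟨?_, fun w => ?_⟩⟩
      · intro e he'
        simp only [SimpleGraph.Walk.edges_cons, List.mem_cons, not_or] at he'
        simp [he'.1, hNe e he'.2]
      · rw [Set.ncard_insert_of_notMem he]
        omega
      · have h5 := deg_insert he w
        have h6 := h4 w
        rw [h5]
        by_cases hwx : w = x
        · subst hwx; simp [hxv] at h5 h6 ⊢; omega
        · simp [hwx] at h5 h6 ⊢; omega

open Classical in
theorem count_aux_s6 {G : SimpleGraph V} {A B : Set V} (hG : Bipartition G A B) {Q T : Set V}
    (hQ : Q ⊆ A) (hT : T ⊆ B) {N : Set (Sym2 V)} (hN : N ⊆ G.edgeSet)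
    (F : Finset V) (hF : ∀ v, v ∈ F ↔ v ∈ Q ∪ T) :
    N.ncard + {e ∈ N | (∃ v ∈ Q, v ∈ e) ∧ ∃ v ∈ T, v ∈ e}.ncard =
      (∑ v ∈ F, {e ∈ N | v ∈ e}.ncard) + {e ∈ N | ∀ v ∈ e, v ∉ Q ∪ T}.ncard := by
  obtain rfl : F = Finset.univ.filter (· ∈ Q ∪ T) := by ext v; simp [hF]
  have key : ∀ P : Sym2 V → Prop, {e ∈ N | P e}.ncard =
      ∑ e ∈ N.toFinset, if P e then 1 else 0 := by
    intro P
    rw [Finset.sum_boole, Set.ncard_eq_toFinset_card']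
    simp only [Nat.cast_id]
    congr 1
    ext e
    simp
  have key0 : N.ncard = ∑ e ∈ N.toFinset, 1 := by
    rw [Set.ncard_eq_toFinset_card']; simp
  rw [key, key, key0]
  simp only [key]
  rw [Finset.sum_comm, ← Finset.sum_add_distrib, ← Finset.sum_add_distrib]
  refine Finset.sum_congr rfl fun e he => ?_
  have heE : e ∈ G.edgeSet := hN (by simpa using he)
  have main : ∀ x y : V, G.Adj x y → x ∈ A →
      (1 + if (∃ v ∈ Q, v ∈ s(x, y)) ∧ ∃ v ∈ T, v ∈ s(x, y) then 1 else 0) =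
      (∑ v with v ∈ Q ∪ T, if v ∈ s(x, y) then 1 else 0) +
        if ∀ v ∈ s(x, y), v ∉ Q ∪ T then 1 else 0 := by
    intro x y h hx
    have hy := (hG.adjA h).1 hx
    have hxT : x ∉ T := fun h' => (hG.notA.2 (hT h')) hx
    have hyQ : y ∉ Q := fun h' => hy (hQ h')
    have hxy := h.ne
    have e1 : (∃ v ∈ Q, v ∈ s(x, y)) ↔ x ∈ Q := by
      simp only [Sym2.mem_iff]
      constructor
      · rintro ⟨v, hv, rfl | rfl⟩
        · exact hv
        · exact absurd hv hyQ
      · intro h; exact ⟨x, h, Or.inl rfl⟩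
    have e2 : (∃ v ∈ T, v ∈ s(x, y)) ↔ y ∈ T := by
      simp only [Sym2.mem_iff]
      constructor
      · rintro ⟨v, hv, rfl | rfl⟩
        · exact absurd hv hxT
        · exact hv
      · intro h; exact ⟨y, h, Or.inr rfl⟩
    have e3 : (∀ v ∈ s(x, y), v ∉ Q ∪ T) ↔ x ∉ Q ∧ y ∉ T := by
      simp [hxT, hyQ]
    have e4 : (∑ v with v ∈ Q ∪ T, if v ∈ s(x, y) then 1 else 0) =
        (if x ∈ Q then 1 else 0) + if y ∈ T then 1 else 0 := by
      rw [Finset.sum_filter]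
      have : ∀ v : V, (if v ∈ Q ∪ T then (if v ∈ s(x, y) then 1 else 0) else 0) =
          (if v = x then (if x ∈ Q then 1 else 0) else 0) +
          (if v = y then (if y ∈ T then 1 else 0) else 0) := by
        intro v
        by_cases h1 : v = x
        · subst h1; simp [hxT, hxy]
        · by_cases h2 : v = y
          · subst h2; simp [hyQ, h1]
          · simp [h1, h2]
      simp only [this, Finset.sum_add_distrib, Finset.sum_ite_eq', Finset.mem_univ, if_true]
    rw [e4]
    simp only [e1, e2, e3]
    by_cases h1 : x ∈ Q <;> by_cases h2 : y ∈ T <;> simp [h1, h2]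
  induction e with
  | h x y =>
    by_cases hx : x ∈ A
    · convert main x y heE hx
    · have hy : y ∈ A := by
        have := hG.adjA (G.mem_edgeSet.1 heE); tauto
      have := main y x (G.mem_edgeSet.1 heE).symm hy
      rw [Sym2.eq_swap] at this
      convert this

theorem max_of_card {G : SimpleGraph V} {b : V → ℕ} {M N : Set (Sym2 V)}
    (hM : IsMaxBMatching G b M) (hN : IsBMatching G b N) (h : N.ncard = M.ncard) :
    IsMaxBMatching G b N :=
  ⟨hN, fun K hK => h ▸ hM.2 K hK⟩

/-- For a maximum `b`-matching `M`: with `U_A` the `M`-loose vertices of `A`, `S_A` the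
vertices with an `M`-wedge path to `U_A`, and `T_A` the vertices of `B` with an
`M`-exposed path to `U_A`: `S_A ∪ (B ∖ T_A)` is a `b`-verifying set, `S_A = D(G;b) ∩ A`,
and `S_A ∪ T_A` is the union of the vertex sets of all inconsistent flexible components
hooked up by `A`. -/
theorem stmt_6 (G : SimpleGraph V) (A B : Set V) (hG : Bipartition G A B) (b : V → ℕ)
    (M : Set (Sym2 V)) (hM : IsMaxBMatching G b M)
    (UA SA TA : Set V)
    (hUA : UA = {v ∈ A | IsLoose b M v})
    (hSA : SA = {x ∈ A | ∃ z ∈ UA, ∃ p : G.Walk x z, IsWedgePath M p})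
    (hTA : TA = {y ∈ B | ∃ z ∈ UA, ∃ p : G.Walk y z, IsExposedPath M p}) :
    IsVerifying G b (SA ∪ (B \ TA)) ∧
    SA = Dset G b ∩ A ∧
    SA ∪ TA = ⋃ c ∈ {c : FlexComp G b | HookedUp G b A c}, c.supp := by
  classical
  have hUAA : ∀ z ∈ UA, z ∈ A := by rw [hUA]; exact fun z h => h.1
  have hUAl : ∀ z ∈ UA, {e ∈ M | z ∈ e}.ncard < b z := by rw [hUA]; exact fun z h => h.2
  have mS : ∀ x, x ∈ SA ↔ x ∈ A ∧ Reach G A M UA x := by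
    intro x
    rw [hSA]
    refine and_congr_right fun hx => ?_
    constructor
    · rintro ⟨z, hz, p, hp⟩
      exact ⟨z, hz, p, (wedge_iff hG M p (hUAA z hz) hx).1 hp⟩
    · rintro ⟨z, hz, p, hp⟩
      exact ⟨z, hz, p, (wedge_iff hG M p (hUAA z hz) hx).2 hp⟩
  have mT : ∀ x, x ∈ TA ↔ x ∉ A ∧ Reach G A M UA x := by
    intro x
    rw [hTA, hG.notA]
    refine and_congr_right fun hx => ?_
    have hx := hG.notA.2 hx
    constructor
    · rintro ⟨z, hz, p, hp⟩
      exact ⟨z, hz, p, (exposed_iff hG M p (hUAA z hz) hx).1 hp⟩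
    · rintro ⟨z, hz, p, hp⟩
      exact ⟨z, hz, p, (exposed_iff hG M p (hUAA z hz) hx).2 hp⟩
  have mU : ∀ z ∈ UA, z ∈ SA := fun z hz => (mS z).2 ⟨hUAA z hz, z, hz, .nil, by simp, by simp [DirW]⟩
  have hTB : TA ⊆ B := fun y hy => hG.notA.1 ((mT y).1 hy).1
  -- closure properties
  have cl1 : ∀ x y, G.Adj x y → x ∈ SA → s(x, y) ∉ M → y ∈ TA := by
    intro x y h hx he
    obtain ⟨hxA, hr⟩ := (mS x).1 hx
    have hy := (hG.adjA h).1 hxA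
    exact (mT y).2 ⟨hy, reach_cons h.symm (by rw [Sym2.eq_swap]; tauto) hr⟩
  have cl2 : ∀ x y, G.Adj x y → y ∈ TA → s(x, y) ∈ M → x ∈ SA := by
    intro x y h hy he
    obtain ⟨hyA, hr⟩ := (mT y).1 hy
    have hx := (hG.adjA h).2 hyA
    exact (mS x).2 ⟨hx, reach_cons h (by tauto) hr⟩
  have tightT : ∀ y ∈ TA, {e ∈ M | y ∈ e}.ncard = b y := by
    intro y hy
    obtain ⟨hyA, z, hz, p, hp, hd⟩ := (mT y).1 hy
    obtain ⟨N, hN, -, -, h2⟩ := augment hG hM.1.1 p (hUAA z hz) hp hd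
    obtain ⟨h3, h4⟩ := h2 hyA
    have hyz : y ≠ z := fun h' => hyA (h' ▸ hUAA z hz)
    by_contra hne
    have hlt := lt_of_le_of_ne (hM.1.2 y) hne
    have : IsBMatching G b N := by
      refine ⟨hN, fun w => ?_⟩
      rw [h4 w]
      have h5 := hM.1.2 w
      by_cases hwz : w = z
      · subst hwz
        have := hUAl w hz
        simp [hyz.symm]; omega
      · by_cases hwy : w = y
        · subst hwy; simp [hwz]; omega
        · simp [hwz, hwy]; omega
    have := hM.2 N this
    omega
  set Q : Set V := A \ SA with hQ
  have hQA : Q ⊆ A := Set.diff_subset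
  have tightQ : ∀ x ∈ Q, {e ∈ M | x ∈ e}.ncard = b x := by
    intro x hx
    by_contra hne
    have hlt := lt_of_le_of_ne (hM.1.2 x) hne
    exact hx.2 (mU x (by rw [hUA]; exact ⟨hx.1, hlt⟩))
  have hZ : (SA ∪ (B \ TA))ᶜ = Q ∪ TA := by
    ext v
    have h1 := hG.notA (v := v)
    have h2 := mS v
    have h3 := mT v
    simp only [Set.mem_compl_iff, Set.mem_union, Set.mem_diff, hQ]
    tauto
  have hZ' : ∀ v, v ∈ SA ∪ (B \ TA) ↔ v ∉ Q ∪ TA := by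
    intro v; rw [← hZ, Set.mem_compl_iff, not_not]
  obtain ⟨F, hF⟩ : ∃ F : Finset V, ∀ v, v ∈ F ↔ v ∈ Q ∪ TA :=
    ⟨Finset.univ.filter (· ∈ Q ∪ TA), by simp⟩
  have hbs : bSum b (SA ∪ (B \ TA))ᶜ = ∑ v ∈ F, b v := by
    rw [hZ]
    unfold bSum
    rw [finsum_mem_eq_toFinset_sum]
    congr 1
    ext v; simp [hF]
  -- edges within Z
  have hEZ : ∀ e ∈ edgesIn G (SA ∪ (B \ TA)), e ∈ M := by
    have main : ∀ x y, G.Adj x y → x ∈ A → x ∈ SA ∪ (B \ TA) → y ∈ SA ∪ (B \ TA) →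
        s(x, y) ∈ M := by
      intro x y h hxA hx hy
      have hyA := (hG.adjA h).1 hxA
      have hx' : x ∈ SA := hx.resolve_right fun h' => hG.notA.2 h'.1 hxA
      have hy' : y ∈ B \ TA := hy.resolve_left fun h' => hyA ((mS y).1 h').1
      by_contra he
      exact hy'.2 (cl1 x y h hx' he)
    rintro e ⟨he, hv⟩
    induction e with
    | h x y =>
      have hadj := G.mem_edgeSet.1 he
      have hx := hv x (by simp)
      have hy := hv y (by simp)
      by_cases hxA : x ∈ A
      · exact main x y hadj hxA hx hy
      · have hyA : y ∈ A := by have := hG.adjA hadj; tauto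
        rw [Sym2.eq_swap]
        exact main y x hadj.symm hyA hy hx
  have hEM : {e ∈ M | ∀ v ∈ e, v ∉ Q ∪ TA} = edgesIn G (SA ∪ (B \ TA)) := by
    ext e
    constructor
    · rintro ⟨h1, h2⟩
      exact ⟨hM.1.1 h1, fun v hv => (hZ' v).2 (h2 v hv)⟩
    · intro h
      exact ⟨hEZ e h, fun v hv => (hZ' v).1 (h.2 v hv)⟩
  have hQT : ∀ x y, G.Adj x y → x ∈ Q → y ∈ TA → s(x, y) ∉ M :=
    fun x y h hx hy he => hx.2 (cl2 x y h hy he)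
  have cross : ∀ e ∈ G.edgeSet, ∀ v ∈ Q, v ∈ e → ∀ w ∈ TA, w ∈ e → e = s(v, w) := by
    intro e _ v hv hve w hw hwe
    have : v ≠ w := fun h' => ((mT w).1 hw).1 (h' ▸ hv.1)
    exact (Sym2.mem_and_mem_iff this).1 ⟨hve, hwe⟩
  have hM0 : {e ∈ M | (∃ v ∈ Q, v ∈ e) ∧ ∃ v ∈ TA, v ∈ e} = ∅ := by
    ext e
    simp only [Set.mem_setOf_eq, Set.mem_empty_iff_false, iff_false]
    rintro ⟨he, ⟨v, hv, hve⟩, w, hw, hwe⟩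
    have := cross e (hM.1.1 he) v hv hve w hw hwe
    subst this
    exact hQT v w (hM.1.1 he) hv hw he
  have hval : bSum b (SA ∪ (B \ TA))ᶜ + (edgesIn G (SA ∪ (B \ TA))).ncard = M.ncard := by
    have h := count_aux_s6 hG hQA hTB hM.1.1 F hF
    rw [hM0, hEM, Set.ncard_empty, add_zero] at h
    rw [h, hbs]
    congr 1
    refine Finset.sum_congr rfl fun v hv => ?_
    have hv : v ∈ Q ∪ TA := (hF v).1 hv
    rcases hv with hv | hv
    · exact (tightQ v hv).symm
    · exact (tightT v hv).symm
  -- complementary slackness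
  have slack : ∀ N, IsMaxBMatching G b N →
      (∀ v ∈ Q ∪ TA, {e ∈ N | v ∈ e}.ncard = b v) ∧
      (∀ e ∈ edgesIn G (SA ∪ (B \ TA)), e ∈ N) ∧
      (∀ x ∈ Q, ∀ y ∈ TA, s(x, y) ∉ N) := by
    intro N hN
    have hcard : N.ncard = M.ncard := le_antisymm (hM.2 N hN.1) (hN.2 M hM.1)
    have h := count_aux_s6 hG hQA hTB hN.1.1 F hF
    have hsub : {e ∈ N | ∀ v ∈ e, v ∉ Q ∪ TA} ⊆ edgesIn G (SA ∪ (B \ TA)) :=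
      fun e he => ⟨hN.1.1 he.1, fun v hv => (hZ' v).2 (he.2 v hv)⟩
    have h1 := Set.ncard_le_ncard hsub (Set.toFinite _)
    have hle : ∀ v ∈ F, {e ∈ N | v ∈ e}.ncard ≤ b v :=
      fun v _ => hN.1.2 v
    have h2 := Finset.sum_le_sum hle
    rw [hbs] at hval
    refine ⟨?_, ?_, ?_⟩
    · have h3 := (Finset.sum_eq_sum_iff_of_le hle).1 (by omega)
      intro v hv
      exact h3 v ((hF v).2 hv)
    · have h3 := Set.eq_of_subset_of_ncard_le hsub (by omega) (Set.toFinite _)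
      intro e he
      rw [← h3] at he
      exact he.1
    · intro x hx y hy he
      have h3 : {e ∈ N | (∃ v ∈ Q, v ∈ e) ∧ ∃ v ∈ TA, v ∈ e}.ncard = 0 := by omega
      rw [Set.ncard_eq_zero] at h3
      have : s(x, y) ∈ {e ∈ N | (∃ v ∈ Q, v ∈ e) ∧ ∃ v ∈ TA, v ∈ e} :=
        ⟨he, ⟨x, hx, by simp⟩, y, hy, by simp⟩
      rw [h3] at this
      exact this
  have shift : ∀ x ∈ A, ∀ z ∈ UA, ∀ p : G.Walk x z, p.IsPath → DirW A M p →
      ∃ N, IsMaxBMatching G b N ∧ IsLoose b N x ∧ (∀ e ∉ p.edges, (e ∈ N ↔ e ∈ M)) := by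
    intro x hx z hz p hp hd
    obtain ⟨N, hN, hNe, h1, -⟩ := augment hG hM.1.1 p (hUAA z hz) hp hd
    obtain ⟨h3, h4⟩ := h1 hx
    have hzl := hUAl z hz
    refine ⟨N, max_of_card hM ⟨hN, fun w => ?_⟩ h3, ?_, hNe⟩
    · have h5 := h4 w
      have h6 := hM.1.2 w
      by_cases hwz : w = z
      · subst hwz; simp at h5; omega
      · simp [hwz] at h5; omega
    · have h5 := h4 x
      have h6 := hM.1.2 x
      unfold IsLoose
      by_cases hwz : x = z
      · subst hwz; simp at h5; omega
      · simp [hwz] at h5; omega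
  have hSD : SA = Dset G b ∩ A := by
    ext x
    constructor
    · intro hx
      obtain ⟨hxA, z, hz, p, hp, hd⟩ := (mS x).1 hx
      obtain ⟨N, hN, hl, -⟩ := shift x hxA z hz p hp hd
      exact ⟨⟨N, hN, hl⟩, hxA⟩
    · rintro ⟨⟨N, hN, hl⟩, hxA⟩
      by_contra hx
      have := (slack N hN).1 x (Or.inl ⟨hxA, hx⟩)
      unfold IsLoose at hl
      omega
  refine ⟨⟨M, hM, hval⟩, hSD, ?_⟩
  ext v
  simp only [Set.mem_iUnion, Set.mem_setOf_eq, exists_prop, SimpleGraph.ConnectedComponent.mem_supp_iff]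
  constructor
  · rintro (hv | hv)
    · refine ⟨_, Or.inl ⟨v, ⟨rfl, ((mS v).1 hv).1⟩, ?_⟩, rfl⟩
      rw [hSD] at hv
      exact hv.1
    · obtain ⟨hvA, z, hz, p, hp, hd⟩ := (mT v).1 hv
      cases p with
      | nil => exact absurd (hUAA _ hz) hvA
      | @cons _ x _ h p =>
        rw [SimpleGraph.Walk.cons_isPath_iff] at hp
        rw [dirW_cons] at hd
        obtain ⟨hp, hvp⟩ := hp
        obtain ⟨he, hd⟩ := hd
        have hxA : x ∈ A := by have := hG.adjA h; tauto
        have hxS : x ∈ SA := (mS x).2 ⟨hxA, z, hz, p, hp, hd⟩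
        have hxD : x ∈ Dset G b ∩ A := hSD ▸ hxS
        by_cases hb : b v = 0
        · refine ⟨_, Or.inr ⟨v, ?_, hb, x, hxD, h⟩, rfl⟩
          have hiso : ∀ w, ¬ (flexGraph G b).Adj v w := by
            rintro w ⟨⟨N, hN, hw⟩, -⟩
            have h1 := hN.1.2 v
            rw [hb, Nat.le_zero, Set.ncard_eq_zero] at h1
            have : s(v, w) ∈ {e ∈ N | v ∈ e} := ⟨hw, by simp⟩
            rw [h1] at this
            exact this
          ext w
          rw [SimpleGraph.ConnectedComponent.mem_supp_iff, SimpleGraph.ConnectedComponent.eq]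
          constructor
          · intro hr
            obtain ⟨q⟩ := hr.symm
            cases q with
            | nil => rfl
            | cons h' _ => exact absurd h' (hiso _)
          · rintro rfl
            exact SimpleGraph.Reachable.refl _
        · -- exchange
          obtain ⟨N, hN, hl, hNe⟩ := shift x hxA z hz p hp hd
          have hvN : s(v, x) ∉ N := by
            rw [hNe _ (fun h' => hvp (p.fst_mem_support_of_mem_edges h'))]
            tauto
          have hpos : {e ∈ N | v ∈ e}.ncard ≠ 0 := by
            rw [(slack N hN).1 v (Or.inr hv)]; exact hb
          obtain ⟨e, heN, hve⟩ := Set.nonempty_of_ncard_ne_zero hpos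
          obtain ⟨u, rfl⟩ := Sym2.mem_iff_exists.1 hve
          have hux : u ≠ x := fun h' => hvN (h' ▸ heN)
          have hvx : v ≠ x := h.ne
          have hvN' : s(v, x) ∉ N \ {s(v, u)} := fun h' => hvN h'.1
          have hK : IsMaxBMatching G b (insert s(v, x) (N \ {s(v, u)})) := by
            refine max_of_card hN ⟨Set.insert_subset h (Set.diff_subset.trans hN.1.1), fun w => ?_⟩ ?_
            · rw [deg_insert hvN' w]
              have h1 := deg_remove heN w
              have h2 := hN.1.2 w
              unfold IsLoose at hl
              by_cases hwv : w = v
              · subst hwv; simp at h1 ⊢; omega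
              · by_cases hwx : w = x
                · subst hwx; simp [hwv, hux.symm] at h1 ⊢; omega
                · simp [hwv, hwx] at h1 ⊢; omega
            · rw [Set.ncard_insert_of_notMem hvN', Set.ncard_diff_singleton_add_one heN]
          have hflex : (flexGraph G b).Adj x v := by
            have : (flexGraph G b).Adj v x := ⟨⟨_, hK, by simp⟩, ⟨N, hN, hvN⟩⟩
            exact this.symm
          refine ⟨_, Or.inl ⟨x, ⟨rfl, hxA⟩, hxD.1⟩, ?_⟩
          rw [SimpleGraph.ConnectedComponent.eq]
          exact hflex.symm.reachable
  · rintro ⟨c, hc, hvc⟩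
    rcases hc with ⟨x, ⟨hxc, hxA⟩, hxD⟩ | ⟨x, hcs, hb, u, hu, hadj⟩
    · have hxS : x ∈ SA := by rw [hSD]; exact ⟨hxD, hxA⟩
      have hclosed1 : ∀ s t, G.Adj s t → IsFlexibleEdge G b s(s, t) → s ∈ A →
          (s ∈ SA ↔ t ∈ TA) := by
        rintro s t hst ⟨⟨N1, hN1, h1⟩, N2, hN2, h2⟩ hsA
        constructor
        · intro hs
          by_contra ht
          refine h2 ((slack N2 hN2).2.1 _ ⟨hst, ?_⟩)
          have htB : t ∈ B := hG.notA.1 ((hG.adjA hst).1 hsA)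
          intro w hw
          rcases Sym2.mem_iff.1 hw with rfl | rfl
          · exact Or.inl hs
          · exact Or.inr ⟨htB, ht⟩
        · intro ht
          by_contra hs
          exact (slack N1 hN1).2.2 s ⟨hsA, hs⟩ t ht h1
      have hclosed : ∀ s t, (flexGraph G b).Adj s t → s ∈ SA ∪ TA → t ∈ SA ∪ TA := by
        intro s t hf hs
        have hf' : IsFlexibleEdge G b s(s, t) := hf
        have hst : G.Adj s t := by
          obtain ⟨⟨N1, hN1, h1⟩, -⟩ := hf'
          exact hN1.1.1 h1
        by_cases hsA : s ∈ A
        · have := hclosed1 s t hst hf' hsA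
          have h3 := mT s
          rcases hs with hs | hs
          · exact Or.inr (this.1 hs)
          · exact absurd hsA (h3.1 hs).1
        · have htA : t ∈ A := by have := hG.adjA hst; tauto
          have := hclosed1 t s hst.symm (by rwa [Sym2.eq_swap]) htA
          rcases hs with hs | hs
          · exact absurd ((mS s).1 hs).1 hsA
          · exact Or.inl (this.2 hs)
      have hr : (flexGraph G b).Reachable x v := by
        rw [← SimpleGraph.ConnectedComponent.eq]
        rw [SimpleGraph.ConnectedComponent.mem_supp_iff] at hxc
        rw [hxc, hvc]
      obtain ⟨q⟩ := hr
      have : ∀ {s t : V} (q : (flexGraph G b).Walk s t), s ∈ SA ∪ TA → t ∈ SA ∪ TA := by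
        intro s t q
        induction q with
        | nil => exact id
        | cons h' _ ih => exact fun hs => ih (hclosed _ _ h' hs)
      exact this q (Or.inl hxS)
    · have hvx : v = x := by
        have : v ∈ c.supp := hvc
        rw [hcs] at this
        exact this
      subst hvx
      have huS : u ∈ SA := hSD ▸ hu
      refine Or.inr (cl1 u v hadj.symm huS fun he => ?_)
      have h1 := hM.1.2 v
      rw [hb, Nat.le_zero, Set.ncard_eq_zero] at h1
      have : s(u, v) ∈ {e ∈ M | v ∈ e} := ⟨he, by simp⟩
      rw [h1] at this
      exact this
end

section
/- Let G be a finite bipartite graph with color classes A and B, b : V(G) → ℕ, and let C₁ and C₂ be two distinct b-loose flexible components both hooked up by A. Then there is no edge of G with one end in V(C₁) and the other end in V(C₂). -/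
open scoped symmDiff

variable {V : Type} [Fintype V]

/-- Degree of `v` in `M`. -/
noncomputable def dg (M : Set (Sym2 V)) (v : V) : ℕ := {e ∈ M | v ∈ e}.ncard

lemma swap_aux (G : SimpleGraph V) (b : V → ℕ) (M : Set (Sym2 V)) (hM : IsMaxBMatching G b M)
    (a a' w : V) (hl : dg M a < b a) (haw : G.Adj a w) (h1 : s(a, w) ∉ M) (h2 : s(a', w) ∈ M) :
    ∃ M', M' = insert s(a, w) (M \ {s(a', w)}) ∧ IsMaxBMatching G b M' ∧ dg M' a' < b a' ∧
      (∀ v, v ≠ a → v ≠ a' → dg M' v = dg M v) := by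
  have ha'w : G.Adj a' w := hM.1.1 h2
  have hne : a ≠ a' := by rintro rfl; exact h1 h2
  have hww : ∀ x ∈ ({a, a'} : Set V), x ≠ w := by
    rintro x (rfl | rfl)
    · exact haw.ne
    · exact ha'w.ne
  have naw := haw.ne
  have na'w := ha'w.ne
  set M' := insert s(a, w) (M \ {s(a', w)}) with hM'
  have hcard : M'.ncard = M.ncard := Set.ncard_exchange h1 h2
  have hself : {e ∈ M' | w ∈ e}.ncard = {e ∈ M | w ∈ e}.ncard := by
    have : {e ∈ M' | w ∈ e} = insert s(a, w) ({e ∈ M | w ∈ e} \ {s(a', w)}) := by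
      ext e
      simp only [hM', Set.mem_setOf_eq, Set.mem_insert_iff, Set.mem_diff, Set.mem_singleton_iff]
      constructor
      · tauto
      · rintro (rfl | h)
        · simp
        · tauto
    rw [this]
    exact Set.ncard_exchange (fun h => h1 h.1) ⟨h2, by simp⟩
  have hoth : ∀ v, v ≠ a → v ≠ a' → dg M' v = dg M v := by
    intro v hv hv'
    by_cases hvw : v = w
    · subst hvw; exact hself
    · unfold dg
      congr 1
      ext e
      simp only [hM', Set.mem_setOf_eq, Set.mem_insert_iff, Set.mem_diff, Set.mem_singleton_iff]
      constructor
      · rintro ⟨rfl | h, h'⟩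
        · simp [hv, hvw] at h'
        · exact ⟨h.1, h'⟩
      · rintro ⟨h, h'⟩
        refine ⟨Or.inr ⟨h, ?_⟩, h'⟩
        rintro rfl
        simp [hv', hvw] at h'
  have ha : dg M' a ≤ dg M a + 1 := by
    have : {e ∈ M' | a ∈ e} ⊆ insert s(a, w) {e ∈ M | a ∈ e} := by
      rintro e ⟨h | h, h'⟩
      · exact Or.inl h
      · exact Or.inr ⟨h.1, h'⟩
    exact (Set.ncard_le_ncard this (Set.toFinite _)).trans (Set.ncard_insert_le _ _)
  have ha' : dg M' a' < dg M a' := by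
    refine Set.ncard_lt_ncard ?_ (Set.toFinite _)
    refine ⟨?_, fun h => ?_⟩
    · rintro e ⟨h | h, h'⟩
      · subst h; simp [hne.symm, na'w] at h'
      · exact ⟨h.1, h'⟩
    · have := (h (show s(a', w) ∈ {e ∈ M | a' ∈ e} from ⟨h2, by simp⟩)).1
      rcases this with h | h
      · simp [hne.symm, na'w] at h
      · exact h.2 rfl
  have hb : ∀ v, dg M v ≤ b v := hM.1.2
  refine ⟨M', rfl, ⟨⟨?_, ?_⟩, ?_⟩, lt_of_lt_of_le ha' (hb _), hoth⟩
  · rintro e (rfl | h)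
    · exact haw
    · exact hM.1.1 h.1
  · intro v
    change dg M' v ≤ b v
    by_cases hv : v = a
    · subst hv; omega
    by_cases hv' : v = a'
    · subst hv'; exact ha'.le.trans (hb _)
    rw [hoth v hv hv']; exact hb v
  · intro N hN
    rw [hcard]; exact hM.2 N hN

/-- alternating two-step relation -/
def altR (G : SimpleGraph V) (A B : Set V) (M : Set (Sym2 V)) (p q : V) : Prop :=
  p ∈ A ∧ q ∈ A ∧ ∃ w ∈ B, G.Adj p w ∧ s(p, w) ∉ M ∧ s(q, w) ∈ M

lemma chain_mono (G : SimpleGraph V) (A B : Set V) (hd : Disjoint A B) (M : Set (Sym2 V))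
    (a a1 w1 : V) (hw1 : w1 ∈ B) (haA : a ∈ A) (l : List V) : ∀ p, a ∉ p :: l → a1 ∉ l →
    List.IsChain (altR G A B M) (p :: l) →
    List.IsChain (altR G A B (insert s(a, w1) (M \ {s(a1, w1)}))) (p :: l) := by
  induction l with
  | nil => intro p _ _ _; simp
  | cons q l ih =>
    intro p hp hq hc
    rw [List.isChain_cons_cons] at hc ⊢
    simp only [List.mem_cons, not_or] at hp hq
    refine ⟨?_, ih q (by simp [hp]) hq.2 hc.2⟩
    obtain ⟨hpA, hqA, w, hwB, h1, h2, h3⟩ := hc.1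
    have hdis : ∀ x ∈ A, ∀ y ∈ B, x ≠ y := fun x hx y hy h =>
      Set.disjoint_left.mp hd hx (h ▸ hy)
    refine ⟨hpA, hqA, w, hwB, h1, ?_, Or.inr ⟨h3, ?_⟩⟩
    · rintro (h | h)
      · rw [Sym2.eq_iff] at h
        rcases h with h | h
        · exact hp.1 h.1.symm
        · exact hdis _ haA _ hwB h.2.symm
      · exact h2 h.1
    · intro h
      have h := Set.mem_singleton_iff.mp h
      rw [Sym2.eq_iff] at h
      rcases h with h | h
      · exact hq.1 h.1.symm
      · exact hdis _ hqA _ hw1 h.1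

lemma shift_list (G : SimpleGraph V) (A B : Set V) (hd : Disjoint A B) (b : V → ℕ) (u : V)
    (l : List V) : ∀ (M : Set (Sym2 V)) (a : V), a ∈ A → IsMaxBMatching G b M → dg M a < b a →
    List.IsChain (altR G A B M) (a :: l) → (a :: l).Nodup →
    (a :: l).getLast (by simp) = u →
    ∃ M', IsMaxBMatching G b M' ∧ dg M' u < b u ∧ (∀ w ∈ B, dg M' w = dg M w) ∧
      ∀ x, s(u, x) ∈ M' → s(u, x) ∈ M := by
  induction l with
  | nil =>
    intro M a ha hM hl _ _ hu
    simp at hu; subst hu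
    exact ⟨M, hM, hl, fun _ _ => rfl, fun _ h => h⟩
  | cons a1 l ih =>
    intro M a ha hM hl hc hn hu
    have hdis : ∀ x ∈ A, ∀ y ∈ B, x ≠ y := fun x hx y hy h =>
      Set.disjoint_left.mp hd hx (h ▸ hy)
    rw [List.isChain_cons_cons] at hc
    rw [List.nodup_cons] at hn
    obtain ⟨-, ha1, w, hwB, h1, h2, h3⟩ := hc.1
    obtain ⟨M1, hM1, hmax, hl1, hdeg⟩ := swap_aux G b M hM a a1 w hl h1 h2 h3
    have hc1 := chain_mono G A B hd M a a1 w hwB ha l a1 hn.1 (List.nodup_cons.mp hn.2).1 hc.2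
    rw [← hM1] at hc1
    rw [List.getLast_cons (by simp)] at hu
    obtain ⟨M', g1, g2, g3, g4⟩ := ih M1 a1 ha1 hmax hl1 hc1 hn.2 hu
    refine ⟨M', g1, g2, fun v hv => ?_, fun x hx => ?_⟩
    · rw [g3 v hv, hdeg v (hdis _ ha _ hv).symm (hdis _ ha1 _ hv).symm]
    · have hx1 := g4 x hx
      rw [hM1] at hx1
      rcases hx1 with h | h
      · exfalso
        have hul : u ∈ a1 :: l := by rw [← hu]; exact List.getLast_mem _
        have huA : u ∈ A := by
          by_cases hnil : l = []
          · subst hnil; simp at hu; rwa [← hu]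
          · have hch : ∀ (l : List V) (p : V), p ∈ A → List.IsChain (altR G A B M) (p :: l) →
                ∀ y ∈ p :: l, y ∈ A := by
              intro l
              induction l with
              | nil => intro p hp _ y hy; simp at hy; rwa [hy]
              | cons q l ih' =>
                intro p hp hc y hy
                rw [List.isChain_cons_cons] at hc
                rcases List.mem_cons.mp hy with h | h
                · rwa [h]
                · exact ih' q hc.1.2.1 hc.2 y h
            exact hch l a1 ha1 hc.2 u hul
        rw [Sym2.eq_iff] at h
        rcases h with h | h
        · exact hn.1 (h.1 ▸ hul)
        · exact hdis _ huA _ hwB h.1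
      · exact h.1

lemma rtg_list {α : Type*} (r : α → α → Prop) {a u : α} (h : Relation.ReflTransGen r a u) :
    ∃ l : List α, List.IsChain r (a :: l) ∧ (a :: l).Nodup ∧ (a :: l).getLast (by simp) = u := by
  induction h using Relation.ReflTransGen.head_induction_on with
  | refl => exact ⟨[], by simp, by simp, by simp⟩
  | head hab _ ih =>
    rename_i a c _
    obtain ⟨l, h1, h2, h3⟩ := ih
    by_cases ha : a ∈ c :: l
    · obtain ⟨s, t, hst⟩ := List.append_of_mem ha
      refine ⟨t, ?_, ?_, ?_⟩
      · rw [hst] at h1; exact h1.right_of_append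
      · rw [hst] at h2; exact h2.of_append_right
      · rw [← h3]; simp [hst]
    · refine ⟨c :: l, ?_, ?_, ?_⟩
      · rw [List.isChain_cons_cons]; exact ⟨hab, h1⟩
      · rw [List.nodup_cons]; exact ⟨ha, h2⟩
      · rw [List.getLast_cons (by simp)]; exact h3

/-- vertices of `A` reachable from a loose vertex of `A` -/
def RA (G : SimpleGraph V) (A B : Set V) (b : V → ℕ) (M : Set (Sym2 V)) : Set V :=
  {u | ∃ a ∈ A, dg M a < b a ∧ Relation.ReflTransGen (altR G A B M) a u}

def RB (G : SimpleGraph V) (A B : Set V) (b : V → ℕ) (M : Set (Sym2 V)) : Set V :=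
  {w | w ∈ B ∧ ∃ a ∈ RA G A B b M, G.Adj a w ∧ s(a, w) ∉ M}

lemma RA_sub (G : SimpleGraph V) (A B : Set V) (b : V → ℕ) (M : Set (Sym2 V)) :
    RA G A B b M ⊆ A := by
  rintro u ⟨a, ha, -, h⟩
  induction h with
  | refl => exact ha
  | tail _ h _ => exact h.2.1

lemma shift (G : SimpleGraph V) (A B : Set V) (hd : Disjoint A B) (b : V → ℕ)
    (M : Set (Sym2 V)) (hM : IsMaxBMatching G b M) (u : V) (hu : u ∈ RA G A B b M) :
    ∃ M', IsMaxBMatching G b M' ∧ dg M' u < b u ∧ (∀ w ∈ B, dg M' w = dg M w) ∧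
      ∀ x, s(u, x) ∈ M' → s(u, x) ∈ M := by
  obtain ⟨a, ha, hl, h⟩ := hu
  obtain ⟨l, h1, h2, h3⟩ := rtg_list _ h
  exact shift_list G A B hd b u l M a ha hM hl h1 h2 h3

lemma RB_tight (G : SimpleGraph V) (A B : Set V) (hd : Disjoint A B) (b : V → ℕ)
    (M : Set (Sym2 V)) (hM : IsMaxBMatching G b M) (w : V) (hw : w ∈ RB G A B b M) :
    dg M w = b w := by
  obtain ⟨hwB, a, ha, hadj, hn⟩ := hw
  obtain ⟨M', g1, g2, g3, g4⟩ := shift G A B hd b M hM a ha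
  refine le_antisymm (hM.1.2 w) ?_
  by_contra hlt
  push Not at hlt
  rw [← g3 w hwB] at hlt
  have hn' : s(a, w) ∉ M' := fun h => hn (g4 w h)
  have hins : ∀ v, dg (insert s(a, w) M') v ≤ dg M' v + 1 := by
    intro v
    have : {e ∈ insert s(a, w) M' | v ∈ e} ⊆ insert s(a, w) {e ∈ M' | v ∈ e} := by
      rintro e ⟨h | h, h'⟩
      · exact Or.inl h
      · exact Or.inr ⟨h, h'⟩
    exact (Set.ncard_le_ncard this (Set.toFinite _)).trans (Set.ncard_insert_le _ _)
  have hB : IsBMatching G b (insert s(a, w) M') := by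
    refine ⟨?_, fun v => ?_⟩
    · rintro e (rfl | h)
      · exact hadj
      · exact g1.1.1 h
    · change dg _ v ≤ b v
      by_cases hv : v = a
      · subst hv; have := hins v; omega
      by_cases hv' : v = w
      · subst hv'; have := hins v; omega
      refine le_trans ?_ (g1.1.2 v)
      refine Set.ncard_le_ncard ?_ (Set.toFinite _)
      rintro e ⟨h | h, h'⟩
      · subst h; simp [hv, hv'] at h'
      · exact ⟨h, h'⟩
  have := g1.2 _ hB
  rw [Set.ncard_insert_of_notMem hn' (Set.toFinite _)] at this
  omega

open Classical in
/-- double counting -/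
lemma dcount (G : SimpleGraph V) (N : Set (Sym2 V)) (hN : N ⊆ G.edgeSet) (Z : Finset V) :
    ∑ z ∈ Z, dg N z + {e ∈ N | ∀ v ∈ e, v ∉ Z}.ncard
      = N.ncard + {e ∈ N | ∀ v ∈ e, v ∈ Z}.ncard := by
  have hfin : ∀ p : Sym2 V → Prop, {e ∈ N | p e}.ncard = ∑ e ∈ N.toFinset, if p e then 1 else 0 := by
    intro p
    rw [← Finset.card_filter, ← Set.ncard_coe_finset]
    congr 1
    ext e; simp
  have hN' : N.ncard = ∑ e ∈ N.toFinset, 1 := by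
    rw [Set.ncard_eq_toFinset_card']; simp
  unfold dg
  rw [hN', hfin, hfin]
  simp only [hfin]
  rw [Finset.sum_comm, ← Finset.sum_add_distrib, ← Finset.sum_add_distrib]
  refine Finset.sum_congr rfl fun e he => ?_
  have heG := hN (Set.mem_toFinset.mp he)
  induction e with
  | h x y =>
    have hxy : x ≠ y := G.ne_of_adj heG
    have : ∀ z (d : Decidable (z ∈ s(x, y))), (@ite ℕ (z ∈ s(x, y)) d 1 0) =
        (if z = x then 1 else 0) + (if z = y then 1 else 0) := by
      intro z d
      by_cases h1 : z = x
      · subst h1; simp [hxy]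
      · simp [h1]
    simp only [this, Finset.sum_add_distrib, Finset.sum_ite_eq']
    simp only [Sym2.mem_iff, forall_eq_or_imp, forall_eq]
    by_cases hx : x ∈ Z <;> by_cases hy : y ∈ Z <;> simp [hx, hy]

open Classical in
lemma cut (G : SimpleGraph V) (b : V → ℕ) (M N : Set (Sym2 V)) (hM : IsMaxBMatching G b M)
    (hN : IsMaxBMatching G b N) (Z : Finset V)
    (hX : ∀ e ∈ G.edgeSet, (∀ v ∈ e, v ∉ Z) → e ∈ M)
    (hY : ∀ e ∈ M, ¬ ∀ v ∈ e, v ∈ Z)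
    (hZ : ∀ z ∈ Z, dg M z = b z) :
    (∀ z ∈ Z, dg N z = b z) ∧ (∀ e ∈ G.edgeSet, (∀ v ∈ e, v ∉ Z) → e ∈ N) ∧
      (∀ e ∈ N, ¬ ∀ v ∈ e, v ∈ Z) := by
  have e1 := dcount G M hM.1.1 Z
  have e2 := dcount G N hN.1.1 Z
  have hc : M.ncard = N.ncard := le_antisymm (hN.2 _ hM.1) (hM.2 _ hN.1)
  have hMX : {e ∈ M | ∀ v ∈ e, v ∉ Z} = {e ∈ G.edgeSet | ∀ v ∈ e, v ∉ Z} := by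
    ext e; constructor
    · exact fun h => ⟨hM.1.1 h.1, h.2⟩
    · exact fun h => ⟨hX e h.1 h.2, h.2⟩
  have hMY : {e ∈ M | ∀ v ∈ e, v ∈ Z} = ∅ := by
    ext e; simp only [Set.mem_setOf_eq, Set.mem_empty_iff_false, iff_false]
    exact fun h => hY e h.1 h.2
  have hsZ : ∑ z ∈ Z, dg M z = ∑ z ∈ Z, b z := Finset.sum_congr rfl hZ
  rw [hMX, hMY, Set.ncard_empty, hsZ] at e1
  have hsub : {e ∈ N | ∀ v ∈ e, v ∉ Z} ⊆ {e ∈ G.edgeSet | ∀ v ∈ e, v ∉ Z} :=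
    fun e h => ⟨hN.1.1 h.1, h.2⟩
  have i1 := Set.ncard_le_ncard hsub (Set.toFinite _)
  have hle : ∀ z ∈ Z, dg N z ≤ b z := fun z _ => hN.1.2 z
  have i2 := Finset.sum_le_sum hle
  refine ⟨?_, ?_, ?_⟩
  · exact (Finset.sum_eq_sum_iff_of_le hle).mp (by omega)
  · have := Set.eq_of_subset_of_ncard_le hsub (by omega) (Set.toFinite _)
    intro e he h
    exact (this.symm.subset ⟨he, h⟩ : e ∈ {e ∈ N | _}).1
  · have h0 : {e ∈ N | ∀ v ∈ e, v ∈ Z}.ncard = 0 := by omega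
    rw [Set.ncard_eq_zero (Set.toFinite _)] at h0
    intro e he h
    exact (h0.subset ⟨he, h⟩ : e ∈ (∅ : Set _))

open Classical in
lemma comp_sub (G : SimpleGraph V) (A B : Set V) (hG : Bipartition G A B) (b : V → ℕ)
    (M : Set (Sym2 V)) (hM : IsMaxBMatching G b M) (c : FlexComp G b)
    (hc : LooseHooked G b A c) (v : V) (hv : v ∈ c.supp) :
    (v ∈ A → v ∈ RA G A B b M) ∧ (v ∈ B → v ∈ RB G A B b M) := by
  have hd := hG.disjoint
  have hAB : ∀ x ∈ A, x ∉ B := fun x hx hy => Set.disjoint_left.mp hd hx hy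
  have hRBB : ∀ x ∈ RB G A B b M, x ∈ B := fun x h => h.1
  set Z : Finset V := ((A \ RA G A B b M) ∪ RB G A B b M).toFinset with hZdef
  have hZA : ∀ x ∈ A, (x ∈ Z ↔ x ∉ RA G A B b M) := by
    intro x hx
    have : x ∉ RB G A B b M := fun h => hAB x hx (hRBB x h)
    simp [hZdef, hx, this]
  have hZB : ∀ x ∈ B, (x ∈ Z ↔ x ∈ RB G A B b M) := by
    intro x hx
    have : x ∉ A := fun h => hAB x h hx
    simp [hZdef, this]
  have hX' : ∀ x y, G.Adj x y → x ∈ A → y ∈ B → x ∉ Z → y ∉ Z → s(x, y) ∈ M := by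
    intro x y hxy hx hy hxZ hyZ
    rw [hZA x hx, not_not] at hxZ
    rw [hZB y hy] at hyZ
    by_contra h
    exact hyZ ⟨hy, x, hxZ, hxy, h⟩
  have hY' : ∀ x y, s(x, y) ∈ M → x ∈ A → y ∈ B → x ∈ Z → y ∈ Z → False := by
    intro x y hxy hx hy hxZ hyZ
    rw [hZA x hx] at hxZ
    rw [hZB y hy] at hyZ
    obtain ⟨_, a, ha, hadj, hn⟩ := hyZ
    have haA := RA_sub _ _ _ _ _ ha
    obtain ⟨a0, h0, h0', h0''⟩ := ha
    exact hxZ ⟨a0, h0, h0', h0''.tail ⟨haA, hx, y, hy, hadj, hn, hxy⟩⟩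
  have key := fun N hN => cut G b M N hM hN Z
    (by
      intro e he h
      induction e with
      | h x y =>
        simp only [Sym2.mem_iff, forall_eq_or_imp, forall_eq] at h
        rcases hG.between he with h' | h'
        · exact hX' x y he h'.1 h'.2 h.1 h.2
        · rw [Sym2.eq_swap]; exact hX' y x (SimpleGraph.Adj.symm he) h'.2 h'.1 h.2 h.1)
    (by
      intro e he h
      induction e with
      | h x y =>
        simp only [Sym2.mem_iff, forall_eq_or_imp, forall_eq] at h
        rcases hG.between (hM.1.1 he) with h' | h'
        · exact hY' x y he h'.1 h'.2 h.1 h.2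
        · rw [Sym2.eq_swap] at he; exact hY' y x he h'.2 h'.1 h.2 h.1)
    (by
      intro z hz
      have hz' : z ∈ (A \ RA G A B b M) ∪ RB G A B b M := by simpa [hZdef] using hz
      rcases hz' with h | h
      · refine le_antisymm (hM.1.2 z) ?_
        by_contra hlt
        push Not at hlt
        exact h.2 ⟨z, h.1, hlt, .refl⟩
      · exact RB_tight G A B hd b M hM z h)
  obtain ⟨d, ⟨hdc, hdA⟩, N, hN, hl⟩ := hc
  have hdZ : d ∉ Z := fun h => by
    have := (key N hN).1 d h
    unfold IsLoose at hl
    unfold dg at this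
    omega
  have hreach : (flexGraph G b).Reachable d v := by
    rw [SimpleGraph.ConnectedComponent.mem_supp_iff] at hdc hv
    exact SimpleGraph.ConnectedComponent.exact (hdc.trans hv.symm)
  rw [SimpleGraph.reachable_iff_reflTransGen] at hreach
  have inv : (v ∈ A ∧ v ∉ Z) ∨ (v ∈ B ∧ v ∈ Z) := by
    clear hv
    induction hreach with
    | refl => exact Or.inl ⟨hdA, hdZ⟩
    | tail _ h ih =>
      rename_i x y _
      obtain ⟨⟨N1, hN1, hin⟩, ⟨N2, hN2, hout⟩⟩ := h
      have hadj : G.Adj x y := hN1.1.1 hin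
      have q1 := (key N1 hN1).2.2 _ hin
      have q2 := fun h => hout ((key N2 hN2).2.1 _ hadj h)
      simp only [Sym2.mem_iff, forall_eq_or_imp, forall_eq] at q1 q2
      rcases ih with ⟨i1, i2⟩ | ⟨i1, i2⟩ <;> rcases hG.between hadj with ⟨j1, j2⟩ | ⟨j1, j2⟩
      · exact Or.inr ⟨j2, by_contra fun h => q2 ⟨i2, h⟩⟩
      · exact (hAB x i1 j1).elim
      · exact (hAB x j1 i1).elim
      · exact Or.inl ⟨j2, fun h => q1 ⟨i2, h⟩⟩
  constructor
  · intro h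
    rcases inv with i | i
    · exact not_not.mp (fun h' => i.2 ((hZA v h).mpr h'))
    · exact (hAB v h i.1).elim
  · intro h
    rcases inv with i | i
    · exact (hAB v i.1 h).elim
    · exact (hZB v h).mp i.2

lemma main_aux_s9 (G : SimpleGraph V) (A B : Set V) (hG : Bipartition G A B) (b : V → ℕ)
    (c₁ c₂ : FlexComp G b) (h₁ : LooseHooked G b A c₁) (h₂ : LooseHooked G b A c₂)
    (hne : c₁ ≠ c₂) (u v : V) (hu : u ∈ c₁.supp) (hv : v ∈ c₂.supp) (huA : u ∈ A) (hvB : v ∈ B)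
    (hadj : G.Adj u v) : False := by
  have hd := hG.disjoint
  have hnf : ¬ IsFlexibleEdge G b s(u, v) := by
    intro h
    have : (flexGraph G b).Adj u v := h
    rw [SimpleGraph.ConnectedComponent.mem_supp_iff] at hu hv
    exact hne (hu.symm.trans ((SimpleGraph.ConnectedComponent.sound this.reachable).trans hv))
  obtain ⟨M, hM⟩ : ∃ M, IsMaxBMatching G b M := by
    obtain ⟨_, _, M, hM, _⟩ := h₁; exact ⟨M, hM⟩
  have huR := (comp_sub G A B hG b M hM c₁ h₁ u hu).1 huA
  have hvR := (comp_sub G A B hG b M hM c₂ h₂ v hv).2 hvB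
  by_cases hm : s(u, v) ∈ M
  · obtain ⟨_, a, ha, hav, hn⟩ := hvR
    obtain ⟨M', g1, g2, g3, g4⟩ := shift G A B hd b M hM a ha
    by_cases hm' : s(u, v) ∈ M'
    · obtain ⟨M'', k1, k2, -⟩ := swap_aux G b M' g1 a u v g2 hav (fun h => hn (g4 _ h)) hm'
      refine hnf ⟨⟨M, hM, hm⟩, M'', k2, ?_⟩
      rw [k1]
      rintro (h | h)
      · rw [h] at hm; exact hn hm
      · exact h.2 rfl
    · exact hnf ⟨⟨M, hM, hm⟩, M', g1, hm'⟩
  · have ht := RB_tight G A B hd b M hM v hvR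
    have hbv : 0 < b v := by
      obtain ⟨d, ⟨hdc, hdA⟩, _⟩ := h₂
      have hreach : (flexGraph G b).Reachable v d := by
        rw [SimpleGraph.ConnectedComponent.mem_supp_iff] at hdc hv
        exact SimpleGraph.ConnectedComponent.exact (hv.trans hdc.symm)
      rw [SimpleGraph.reachable_iff_reflTransGen] at hreach
      rcases hreach.cases_head with h | ⟨y, hy, -⟩
      · exact (Set.disjoint_left.mp hd hdA (h ▸ hvB)).elim
      · obtain ⟨⟨N, hN, hin⟩, -⟩ := hy
        refine lt_of_lt_of_le ?_ (hN.1.2 v)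
        rw [Set.ncard_pos (Set.toFinite _)]
        exact ⟨_, hin, by simp⟩
    obtain ⟨M', g1, g2, g3, g4⟩ := shift G A B hd b M hM u huR
    have hm' : s(u, v) ∉ M' := fun h => hm (g4 _ h)
    have hp : 0 < dg M' v := by rw [g3 v hvB, ht]; exact hbv
    unfold dg at hp
    rw [Set.ncard_pos (Set.toFinite _)] at hp
    obtain ⟨e, he, hve⟩ := hp
    obtain ⟨y, rfl⟩ := Sym2.mem_iff_exists.mp hve
    rw [Sym2.eq_swap] at he
    obtain ⟨M'', k1, k2, -⟩ := swap_aux G b M' g1 u y v g2 hadj hm' he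
    exact hnf ⟨⟨M'', k2, by rw [k1]; exact Or.inl rfl⟩, M, hM, hm⟩

/-- Two distinct `b`-loose flexible components both hooked up by `A` are joined by no edge
of `G`. -/
theorem stmt_9 (G : SimpleGraph V) (A B : Set V) (hG : Bipartition G A B) (b : V → ℕ)
    (c₁ c₂ : FlexComp G b) (h₁ : LooseHooked G b A c₁) (h₂ : LooseHooked G b A c₂)
    (hne : c₁ ≠ c₂) :
    ∀ u ∈ c₁.supp, ∀ v ∈ c₂.supp, ¬ G.Adj u v := by
  intro u hu v hv hadj
  rcases hG.between hadj with h | h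
  · exact main_aux_s9 G A B hG b c₁ c₂ h₁ h₂ hne u v hu hv h.1 h.2 hadj
  · exact main_aux_s9 G A B hG b c₂ c₁ h₂ h₁ hne.symm v u hv hu h.2 h.1 hadj.symm
end
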